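/- arXiv:1307.5009 — 2 statements merged into one kernel-verified Lean document; each statement's English description precedes it below -/
import Mathlib

section
/- Let μ be a shift-invariant Borel probability measure on the full shift Σ^ℕ whose topological support is all of Σ^ℕ. Then there exists a sequence (μ_n)_n of shift-invariant Borel probability measures on Σ^ℕ such that: (1) μ_n → μ weakly; (2) each μ_n is ergodic with respect to the shift; (3) h(μ_n) → h(μ). -/
open MeasureTheory Filter Topology Metric Set
open scoped ENNReal NNReal Classical

namespace Multifractal

/-- Infinite strings over `{1,…,N}`. -/
abbrev Seq (N : ℕ) := ℕ → Fin N

/-- Finite strings over `{1,…,N}` (the empty string is excluded where appropriate). -/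
abbrev Word (N : ℕ) := List (Fin N)

variable {N : ℕ}

/-- The shift map on `Σ^ℕ`. -/
def shift : Seq N → Seq N := fun x n => x (n + 1)

/-- The cylinder `[w]` generated by a finite string `w`. -/
def cylinder (w : Word N) : Set (Seq N) :=
  {x : Seq N | ∀ (k : ℕ) (h : k < w.length), x k = w.get ⟨k, h⟩}

/-- Birkhoff sum `∑_{k<n} φ(S^k x)`. -/
noncomputable def birkhoff (φ : Seq N → ℝ) (n : ℕ) (x : Seq N) : ℝ :=
  ∑ k ∈ Finset.range n, φ (shift^[k] x)

/-- `s_w = sup_{x ∈ [w]} exp (∑_{k<|w|} Λ(S^k x))`. -/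
noncomputable def sWord (Λ : Seq N → ℝ) (w : Word N) : ℝ :=
  sSup ((fun x => Real.exp (birkhoff Λ w.length x)) '' cylinder w)

/-- Bounded distortion (condition (C3)): `exp(S_nΛ(i))/exp(S_nΛ(j)) ∈ [1/c, c]`
whenever `i|n = j|n`.  (By symmetry in `i,j` the one-sided bound suffices.) -/
def BddDistortion (Λ : Seq N → ℝ) (c : ℝ) : Prop :=
  ∀ (n : ℕ) (i j : Seq N), (∀ k < n, i k = j k) →
    Real.exp (birkhoff Λ n i) ≤ c * Real.exp (birkhoff Λ n j)

/-- The empirical measure `L_n x = (1/n) ∑_{k<n} δ_{S^k x}` (junk value `δ_x` for `n = 0`). -/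
noncomputable def emp (n : ℕ) (x : Seq N) : ProbabilityMeasure (Seq N) :=
  if h : n = 0 then ⟨Measure.dirac x, inferInstance⟩
  else
    ⟨(n : ℝ≥0∞)⁻¹ • ∑ k ∈ Finset.range n, Measure.dirac (shift^[k] x), by
      constructor
      simp only [Measure.smul_apply, Measure.coe_finset_sum, Finset.sum_apply, measure_univ,
        Finset.sum_const, Finset.card_range, nsmul_eq_mul, mul_one, smul_eq_mul]
      exact ENNReal.inv_mul_cancel (Nat.cast_ne_zero.mpr h) (ENNReal.natCast_ne_top n)⟩

/-- Shift invariance of a probability measure. -/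
def Invariant (μ : ProbabilityMeasure (Seq N)) : Prop :=
  μ.toMeasure.map shift = μ.toMeasure

/-- `n`-th partition entropy `-∑_{|w|=n} μ[w] log μ[w]`. -/
noncomputable def entropyAux (μ : ProbabilityMeasure (Seq N)) (n : ℕ) : ℝ :=
  -∑ w : Fin n → Fin N,
      (μ (cylinder (List.ofFn w)) : ℝ) * Real.log (μ (cylinder (List.ofFn w)) : ℝ)

/-- The Kolmogorov–Sinai entropy of a (shift-invariant) measure on the full shift,
via the generating partition into cylinders. -/
noncomputable def entropy (μ : ProbabilityMeasure (Seq N)) : ℝ :=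
  Filter.atTop.liminf fun n => entropyAux μ n / n

/-- Abscissa of convergence of the "zeta-function" `s ↦ ∑ a_w^s`, the sum ranging over the
nonempty finite strings satisfying `P`; values in `EReal` (so `⊤` if never summable and `⊥`
if always summable, e.g. for an empty index set). -/
noncomputable def sigmaAbs (a : Word N → ℝ) (P : Word N → Prop) : EReal :=
  sInf ((fun t : ℝ => (t : EReal)) ''
    {t : ℝ | Summable fun w : {w : Word N // w ≠ [] ∧ P w} => a w.1 ^ t})

variable {X : Type*}

/-- `U(L_{|w|}[w]) ⊆ B`. -/
def inTarget (U : ProbabilityMeasure (Seq N) → X) (B : Set X) (w : Word N) : Prop :=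
  ∀ x ∈ cylinder w, U (emp w.length x) ∈ B

/-- The closed `r`-neighbourhood `B(C,r)` of a set. -/
def cball [MetricSpace X] (C : Set X) (r : ℝ) : Set X := {x | infDist x C ≤ r}

/-- The counting function `N_δ^{U,Λ}(C,r)`: number of strings `w` with `s_w ≈ δ` and
`U(L_{|w|}[w]) ⊆ B(C,r)`. -/
noncomputable def Ncount [MetricSpace X] (Λ : Seq N → ℝ) (U : ProbabilityMeasure (Seq N) → X)
    (C : Set X) (r δ : ℝ) : ℕ :=
  Set.ncard {w : Word N | w ≠ [] ∧ sWord Λ w ≤ δ ∧ δ < sWord Λ w.dropLast ∧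
    inTarget U (cball C r) w}

/-- `log m / (-log δ)`, read as `-∞` when `m = 0`. -/
noncomputable def ratioE (m : ℕ) (δ : ℝ) : EReal :=
  if m = 0 then ⊥ else (((Real.log m) / (-Real.log δ) : ℝ) : EReal)

/-- The `r`-approximate lower coarse multifractal spectrum `f̲^{U,Λ}(C,r)`. -/
noncomputable def coarseLowerR [MetricSpace X] (Λ : Seq N → ℝ)
    (U : ProbabilityMeasure (Seq N) → X) (C : Set X) (r : ℝ) : EReal :=
  Filter.liminf (fun δ : ℝ => ratioE (Ncount Λ U C r δ) δ) (𝓝[>] (0 : ℝ))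

/-- The lower coarse multifractal spectrum `f̲^{U,Λ}(C) = lim_{r↘0} f̲^{U,Λ}(C,r)`;
since `f̲^{U,Λ}(C,r)` is nondecreasing in `r`, the limit is the infimum over `r > 0`. -/
noncomputable def coarseLower [MetricSpace X] (Λ : Seq N → ℝ)
    (U : ProbabilityMeasure (Seq N) → X) (C : Set X) : EReal :=
  ⨅ (r : ℝ) (_ : 0 < r), coarseLowerR Λ U C r

/-- The variational quantity `sup { -h(μ)/∫Λ dμ : μ shift-invariant, Uμ ∈ C }`. -/
noncomputable def varSup (Λ : Seq N → ℝ) (U : ProbabilityMeasure (Seq N) → X)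
    (C : Set X) : EReal :=
  sSup {x : EReal | ∃ μ : ProbabilityMeasure (Seq N), Invariant μ ∧ U μ ∈ C ∧
    x = ((-(entropy μ) / ∫ y, Λ y ∂μ.toMeasure : ℝ) : EReal)}

end Multifractal

namespace Multifractal

/-!
Fix `n` and write words of length `n` one after another, independently and each distributed as the
first `n` letters under `μ`. The law of the resulting sequence is invariant and ergodic for the
`n`-th iterate of the shift, by Kolmogorov's zero-one law, so its average `μ_n` over the first `n`
shifts is invariant and ergodic for the shift itself. Averaging `n` measures raises Shannon entropy
by at most `log n`, and a window of length `m` contains and is contained in `m / n + O(1)` whole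
words; hence `h(μ_n) = H_n(μ) / n`, where `H_n(μ)` is the entropy of the first `n` letters. All but
at most `L` of the `n` starting positions of a window of length `L` keep it inside a single word,
where it has the same law as under `μ`, so that `μ_n` and `μ` differ by at most `L / n` on events
depending on the first `L` letters. It remains to let `n` run through a sequence along which
`H_n(μ) / n` converges to its lower limit `h(μ)`.
-/

section NegMulLog

open scoped BigOperators

variable {ι : Type*}

lemma negMulLog_sum_le {s : Finset ι} {x : ι → ℝ} (hx : ∀ i ∈ s, 0 ≤ x i) :
    Real.negMulLog (∑ i ∈ s, x i) ≤ ∑ i ∈ s, Real.negMulLog (x i) := by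
  rw [Real.negMulLog, neg_mul, Finset.sum_mul, ← Finset.sum_neg_distrib]
  refine Finset.sum_le_sum fun i hi => ?_
  rw [Real.negMulLog, neg_mul, neg_le_neg_iff]
  rcases (hx i hi).eq_or_lt with h | h
  · simp [← h]
  · exact mul_le_mul_of_nonneg_left (Real.log_le_log h (Finset.single_le_sum hx hi)) h.le

lemma expect_negMulLog_le {s : Finset ι} (hs : s.Nonempty) {x : ι → ℝ} (hx : ∀ i ∈ s, 0 ≤ x i) :
    𝔼 i ∈ s, Real.negMulLog (x i) ≤ Real.negMulLog (𝔼 i ∈ s, x i) := by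
  have hcard : (s.card : ℝ) ≠ 0 := by exact_mod_cast hs.card_ne_zero
  have := Real.concaveOn_negMulLog.le_map_sum (t := s) (w := fun _ => (s.card : ℝ)⁻¹) (p := x)
    (fun _ _ => by positivity) (by simp [hcard]) hx
  simpa only [smul_eq_mul, ← Finset.mul_sum, Finset.expect_eq_sum_div_card, div_eq_inv_mul]
    using this

lemma negMulLog_expect_le {s : Finset ι} {x : ι → ℝ} (hx : ∀ i ∈ s, 0 ≤ x i) :
    Real.negMulLog (𝔼 i ∈ s, x i) ≤
      𝔼 i ∈ s, Real.negMulLog (x i) + (𝔼 i ∈ s, x i) * Real.log s.card := by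
  simp only [Finset.expect_eq_sum_div_card, Finset.sum_div, Finset.sum_mul]
  refine (negMulLog_sum_le fun i hi => div_nonneg (hx i hi) (Nat.cast_nonneg _)).trans_eq ?_
  rw [← Finset.sum_add_distrib]
  refine Finset.sum_congr rfl fun i _ => ?_
  rw [div_eq_mul_inv, Real.negMulLog_mul, Real.negMulLog, Real.negMulLog, Real.log_inv]
  ring

lemma negMulLog_prod [DecidableEq ι] (s : Finset ι) (x : ι → ℝ) :
    Real.negMulLog (∏ i ∈ s, x i) =
      ∑ j ∈ s, Real.negMulLog (x j) * ∏ i ∈ s.erase j, x i := by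
  induction s using Finset.induction_on with
  | empty => simp
  | insert a s ha ih =>
    rw [Finset.prod_insert ha, Real.negMulLog_mul, ih, Finset.sum_insert ha,
      Finset.erase_insert ha, mul_comm, Finset.mul_sum]
    congr 1
    refine Finset.sum_congr rfl fun j hj => ?_
    have hja : a ≠ j := fun h => ha (h ▸ hj)
    rw [Finset.erase_insert_of_ne hja, Finset.prod_insert fun h => ha (Finset.mem_of_mem_erase h)]
    ring

lemma sum_negMulLog_prod [Fintype ι] [DecidableEq ι] {α : ι → Type*} [∀ i, Fintype (α i)]
    {p : ∀ i, α i → ℝ} (hp : ∀ i, ∑ a, p i a = 1) :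
    ∑ a : ∀ i, α i, Real.negMulLog (∏ i, p i (a i)) = ∑ i, ∑ a, Real.negMulLog (p i a) := by
  simp only [negMulLog_prod]
  rw [Finset.sum_comm]
  refine Finset.sum_congr rfl fun j _ => ?_
  set r : ∀ i, α i → ℝ := Function.update p j fun a => Real.negMulLog (p j a)
  have hrj : r j = fun a => Real.negMulLog (p j a) := Function.update_self ..
  have hri {i} (hi : i ∈ Finset.univ.erase j) : r i = p i :=
    Function.update_of_ne (Finset.ne_of_mem_erase hi) ..
  calc ∑ a : ∀ i, α i, Real.negMulLog (p j (a j)) * ∏ i ∈ Finset.univ.erase j, p i (a i)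
      = ∑ a : ∀ i, α i, ∏ i, r i (a i) := by
        refine Finset.sum_congr rfl fun a _ => ?_
        rw [← Finset.mul_prod_erase _ _ (Finset.mem_univ j), hrj]
        exact congrArg _ (Finset.prod_congr rfl fun i hi => by rw [hri hi])
    _ = ∏ i, ∑ a, r i a := (Fintype.prod_sum r).symm
    _ = ∑ a, Real.negMulLog (p j a) := by
        rw [← Finset.mul_prod_erase _ _ (Finset.mem_univ j), hrj,
          Finset.prod_eq_one fun i hi => by rw [hri hi, hp i], mul_one]

end NegMulLog

section ShannonEntropy

variable {Ω Ω' α β : Type*} [MeasurableSpace Ω] [MeasurableSpace Ω'] [Fintype α] [Fintype β]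
  {P : Measure Ω}

/-- The Shannon entropy (in nats) of a finite-valued random variable `X` under `P`; equivalently,
the entropy of the partition of `Ω` into the fibres of `X`. -/
noncomputable def shannonEntropy (P : Measure Ω) (X : Ω → α) : ℝ :=
  ∑ a, Real.negMulLog (P.real (X ⁻¹' {a}))

lemma shannonEntropy_nonneg [IsProbabilityMeasure P] (X : Ω → α) : 0 ≤ shannonEntropy P X :=
  Finset.sum_nonneg fun _ _ => Real.negMulLog_nonneg measureReal_nonneg measureReal_le_one

lemma shannonEntropy_equiv_comp (e : α ≃ β) (X : Ω → α) :
    shannonEntropy P (e ∘ X) = shannonEntropy P X := by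
  rw [shannonEntropy, ← e.sum_comp]
  simp only [shannonEntropy, preimage_comp, ← image_singleton, preimage_image_eq _ e.injective]

variable [MeasurableSpace α] [MeasurableSingletonClass α] {X : Ω → α}

lemma shannonEntropy_map {f : Ω → Ω'} (hf : Measurable f) {Y : Ω' → α} (hY : Measurable Y) :
    shannonEntropy (P.map f) Y = shannonEntropy P (Y ∘ f) :=
  Finset.sum_congr rfl fun a _ => by
    rw [map_measureReal_apply hf (hY (measurableSet_singleton a)), preimage_comp]

lemma shannonEntropy_comp_le [IsFiniteMeasure P] (hX : Measurable X) (g : α → β) :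
    shannonEntropy P (g ∘ X) ≤ shannonEntropy P X := by
  rw [shannonEntropy, shannonEntropy, ← Finset.sum_fiberwise Finset.univ g]
  refine Finset.sum_le_sum fun b _ => ?_
  have hfiber : (g ∘ X) ⁻¹' {b} = X ⁻¹' ↑(Finset.univ.filter fun a => g a = b) := by ext; simp
  rw [hfiber,
    ← sum_measureReal_preimage_singleton _ fun a _ => hX (measurableSet_singleton a)]
  exact negMulLog_sum_le fun _ _ => measureReal_nonneg

lemma sum_measureReal_fiber_eq_one [IsProbabilityMeasure P] (hX : Measurable X) :
    ∑ a, P.real (X ⁻¹' {a}) = 1 := by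
  rw [sum_measureReal_preimage_singleton _ fun a _ => hX (measurableSet_singleton a)]
  simp

lemma shannonEntropy_le_log_card [IsProbabilityMeasure P] (hX : Measurable X) :
    shannonEntropy P X ≤ Real.log (Fintype.card α) := by
  have : Nonempty α := (nonempty_of_isProbabilityMeasure P).map X
  have hpos : (0 : ℝ) < Fintype.card α := by exact_mod_cast Fintype.card_pos
  have h := expect_negMulLog_le Finset.univ_nonempty fun a (_ : a ∈ Finset.univ) =>
    measureReal_nonneg (μ := P) (s := X ⁻¹' {a})
  rw [Finset.expect_eq_sum_div_card, Finset.expect_eq_sum_div_card, sum_measureReal_fiber_eq_one hX,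
    Finset.card_univ, one_div, Real.negMulLog, Real.log_inv, neg_mul_neg, ← div_eq_inv_mul] at h
  exact (div_le_div_iff_of_pos_right hpos).1 h

lemma shannonEntropy_pi {ι : Type*} [Fintype ι] [DecidableEq ι] {α : ι → Type*}
    [∀ i, Fintype (α i)] [∀ i, MeasurableSpace (α i)] [∀ i, MeasurableSingletonClass (α i)]
    {X : ∀ i, Ω → α i} (hX : ∀ i, Measurable (X i)) (hindep : ProbabilityTheory.iIndepFun X P) :
    shannonEntropy P (fun ω i => X i ω) = ∑ i, shannonEntropy P (X i) := by
  have := hindep.isProbabilityMeasure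
  rw [shannonEntropy]
  simp only [shannonEntropy, ← sum_negMulLog_prod fun i => sum_measureReal_fiber_eq_one (hX i)]
  refine Finset.sum_congr rfl fun a _ => congrArg Real.negMulLog ?_
  have hfiber : (fun ω i => X i ω) ⁻¹' {a} = ⋂ i ∈ Finset.univ, X i ⁻¹' {a i} := by
    ext; simp [funext_iff]
  rw [hfiber, measureReal_def, hindep.measure_inter_preimage_eq_mul Finset.univ
    fun i _ => measurableSet_singleton (a i), ENNReal.toReal_prod]
  rfl

end ShannonEntropy

section OrbitAverage

open scoped BigOperators

variable {Ω : Type*} [MeasurableSpace Ω] {T : Ω → Ω} {n : ℕ} {ν : Measure Ω}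

/-- The Cesàro average of the push-forwards of `ν` under the first `n` iterates of `T`, which is
`T`-invariant as soon as `ν` is `T^[n]`-invariant. It is the zero measure for `n = 0`. -/
noncomputable def orbitAverage (T : Ω → Ω) (n : ℕ) (ν : Measure Ω) : Measure Ω :=
  (n : ℝ≥0∞)⁻¹ • ∑ k ∈ Finset.range n, ν.map T^[k]

lemma orbitAverage_apply (hT : Measurable T) {A : Set Ω} (hA : MeasurableSet A) :
    orbitAverage T n ν A = (n : ℝ≥0∞)⁻¹ * ∑ k ∈ Finset.range n, ν (T^[k] ⁻¹' A) := by
  simp [orbitAverage, Measure.map_apply (hT.iterate _) hA]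

lemma orbitAverage_apply_of_preimage_eq [NeZero n] (hT : Measurable T) {A : Set Ω}
    (hA : MeasurableSet A) (hinv : T ⁻¹' A = A) : orbitAverage T n ν A = ν A := by
  have hiter (k : ℕ) : T^[k] ⁻¹' A = A := Function.IsFixedPt.preimage_iterate hinv k
  simp only [orbitAverage_apply hT hA, hiter, Finset.sum_const, Finset.card_range, nsmul_eq_mul,
    ← mul_assoc]
  rw [ENNReal.inv_mul_cancel (NeZero.ne _) (ENNReal.natCast_ne_top n), one_mul]

lemma isProbabilityMeasure_orbitAverage [NeZero n] [IsProbabilityMeasure ν] (hT : Measurable T) :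
    IsProbabilityMeasure (orbitAverage T n ν) :=
  ⟨by rw [orbitAverage_apply_of_preimage_eq hT .univ preimage_univ, measure_univ]⟩

lemma measureReal_orbitAverage [IsFiniteMeasure ν] (hT : Measurable T) {A : Set Ω}
    (hA : MeasurableSet A) :
    (orbitAverage T n ν).real A = 𝔼 k ∈ Finset.range n, ν.real (T^[k] ⁻¹' A) := by
  rw [measureReal_def, orbitAverage_apply hT hA, ENNReal.toReal_mul,
    ENNReal.toReal_sum fun _ _ => measure_ne_top _ _, Finset.expect_eq_sum_div_card,
    div_eq_inv_mul, Finset.card_range, ENNReal.toReal_inv, ENNReal.toReal_natCast]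
  rfl

lemma measurePreserving_orbitAverage (hT : Measurable T) (hν : ν.map T^[n] = ν) :
    MeasurePreserving T (orbitAverage T n ν) (orbitAverage T n ν) := by
  refine ⟨hT, ?_⟩
  have hmap (k : ℕ) : (ν.map T^[k]).map T = ν.map T^[k + 1] := by
    rw [Measure.map_map hT (hT.iterate k), Function.iterate_succ']
  have hsum : ∑ k ∈ Finset.range n, ν.map T^[k + 1] = ∑ k ∈ Finset.range n, ν.map T^[k] := by
    cases n with
    | zero => rfl
    | succ n => rw [Finset.sum_range_succ, hν, Finset.sum_range_succ', Function.iterate_zero,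
        Measure.map_id]
  simp only [orbitAverage, Measure.map_smul]
  rw [← Measure.mapₗ_apply_of_measurable hT, map_sum]
  simp only [Measure.mapₗ_apply_of_measurable hT, hmap, hsum]

lemma ergodic_orbitAverage [NeZero n] (hT : Measurable T)
    (hν : Ergodic T^[n] ν) : Ergodic T (orbitAverage T n ν) := by
  refine ⟨measurePreserving_orbitAverage hT hν.map_eq, ⟨fun A hA hinv => ?_⟩⟩
  have hcompl : T ⁻¹' Aᶜ = Aᶜ := by rw [preimage_compl, hinv]
  rw [eventuallyConst_set', ae_eq_empty, ae_eq_univ,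
    orbitAverage_apply_of_preimage_eq hT hA hinv,
    orbitAverage_apply_of_preimage_eq hT hA.compl hcompl]
  exact hν.measure_self_or_compl_eq_zero hA (Function.IsFixedPt.preimage_iterate hinv n)

variable {α : Type*} [Fintype α] [MeasurableSpace α] [MeasurableSingletonClass α] {X : Ω → α}

lemma expect_shannonEntropy_le_shannonEntropy_orbitAverage [NeZero n] [IsFiniteMeasure ν]
    (hT : Measurable T) (hX : Measurable X) :
    𝔼 k ∈ Finset.range n, shannonEntropy ν (X ∘ T^[k]) ≤
      shannonEntropy (orbitAverage T n ν) X := by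
  simp only [shannonEntropy]
  rw [Finset.expect_sum_comm]
  refine Finset.sum_le_sum fun a _ => ?_
  rw [measureReal_orbitAverage hT (hX (measurableSet_singleton a))]
  exact expect_negMulLog_le (Finset.nonempty_range_iff.2 (NeZero.ne n))
    fun _ _ => measureReal_nonneg

lemma shannonEntropy_orbitAverage_le [NeZero n] [IsProbabilityMeasure ν] (hT : Measurable T)
    (hX : Measurable X) :
    shannonEntropy (orbitAverage T n ν) X ≤
      𝔼 k ∈ Finset.range n, shannonEntropy ν (X ∘ T^[k]) + Real.log n := by
  have := isProbabilityMeasure_orbitAverage (n := n) (ν := ν) hT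
  have hreal (a : α) : (orbitAverage T n ν).real (X ⁻¹' {a}) =
      𝔼 k ∈ Finset.range n, ν.real ((X ∘ T^[k]) ⁻¹' {a}) :=
    measureReal_orbitAverage hT (hX (measurableSet_singleton a))
  calc shannonEntropy (orbitAverage T n ν) X
      ≤ ∑ a, (𝔼 k ∈ Finset.range n, Real.negMulLog (ν.real ((X ∘ T^[k]) ⁻¹' {a})) +
          (orbitAverage T n ν).real (X ⁻¹' {a}) * Real.log n) := by
        refine Finset.sum_le_sum fun a _ => ?_
        rw [hreal a]
        exact (negMulLog_expect_le fun _ _ => measureReal_nonneg).trans_eq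
          (by rw [Finset.card_range])
    _ = 𝔼 k ∈ Finset.range n, shannonEntropy ν (X ∘ T^[k]) + Real.log n := by
        rw [Finset.sum_add_distrib, ← Finset.expect_sum_comm, ← Finset.sum_mul,
          sum_measureReal_fiber_eq_one hX, one_mul]
        rfl

end OrbitAverage

section Window

variable {α : Type*}

/-- The one-sided shift on sequences over an arbitrary alphabet; `Multifractal.shift` is the
special case of the alphabet `Fin N`. -/
def leftShift (x : ℕ → α) : ℕ → α := fun i => x (i + 1)

/-- The word of length `m` read in `x` from position `s` on. -/
def window (s m : ℕ) (x : ℕ → α) : Fin m → α := fun i => x (s + i)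

lemma leftShift_iterate_apply (k : ℕ) (x : ℕ → α) (i : ℕ) : leftShift^[k] x i = x (i + k) := by
  induction k generalizing x with
  | zero => rfl
  | succ k ih => rw [Function.iterate_succ_apply, ih, leftShift, add_assoc]

lemma window_comp_leftShift_iterate (s m k : ℕ) :
    (window s m : (ℕ → α) → _) ∘ leftShift^[k] = window (k + s) m := by
  ext x i
  simp only [Function.comp_apply, window, leftShift_iterate_apply]
  congr 1
  omega

variable [MeasurableSpace α]

@[fun_prop]
lemma measurable_leftShift : Measurable (leftShift : (ℕ → α) → _) := by
  unfold leftShift; fun_prop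

@[fun_prop]
lemma measurable_window (s m : ℕ) : Measurable (window s m : (ℕ → α) → _) := by
  unfold window; fun_prop

instance (s m : ℕ) (μ : Measure (ℕ → α)) [IsProbabilityMeasure μ] :
    IsProbabilityMeasure (μ.map (window s m)) :=
  Measure.isProbabilityMeasure_map (by fun_prop)

lemma exists_measurable_window_eq_comp {s m s' m' : ℕ} (hs : s' ≤ s) (hm : s + m ≤ s' + m') :
    ∃ g : (Fin m' → α) → Fin m → α, Measurable g ∧ window s m = g ∘ window s' m' := by
  refine ⟨fun a i => a ⟨s + i - s', by omega⟩, by fun_prop, ?_⟩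
  ext x i
  simp only [Function.comp_apply, window]
  congr 1
  omega

lemma map_window_eq_of_map_window_eq {μ ν : Measure (ℕ → α)} {s m s' m' : ℕ} (hs : s' ≤ s)
    (hm : s + m ≤ s' + m') (h : μ.map (window s' m') = ν.map (window s' m')) :
    μ.map (window s m) = ν.map (window s m) := by
  obtain ⟨g, hg, hwindow⟩ := exists_measurable_window_eq_comp (α := α) hs hm
  rw [hwindow, ← Measure.map_map hg (by fun_prop), h, Measure.map_map hg (by fun_prop)]

lemma map_window_of_measurePreserving {μ : Measure (ℕ → α)}
    (hμ : MeasurePreserving leftShift μ μ) (s m : ℕ) :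
    μ.map (window s m) = μ.map (window 0 m) := by
  have hwindow : (window s m : (ℕ → α) → _) = window 0 m ∘ leftShift^[s] :=
    (window_comp_leftShift_iterate 0 m s).symm
  rw [hwindow, ← Measure.map_map (by fun_prop) (measurable_leftShift.iterate s),
    (hμ.iterate s).map_eq]

lemma shannonEntropy_window_mono [Fintype α] [MeasurableSingletonClass α] (P : Measure (ℕ → α))
    [IsFiniteMeasure P] {s m s' m' : ℕ} (hs : s' ≤ s) (hm : s + m ≤ s' + m') :
    shannonEntropy P (window s m) ≤ shannonEntropy P (window s' m') := by
  obtain ⟨g, -, hwindow⟩ := exists_measurable_window_eq_comp (α := α) hs hm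
  rw [hwindow]
  exact shannonEntropy_comp_le (by fun_prop) g

end Window

section InfiniteProduct

variable {α : Type*} [MeasurableSpace α] (p : Measure α) [IsProbabilityMeasure p]

lemma measurePreserving_leftShift_infinitePi :
    MeasurePreserving leftShift (Measure.infinitePi fun _ : ℕ => p)
      (Measure.infinitePi fun _ : ℕ => p) :=
  ⟨measurable_leftShift,
    Measure.map_infinitePi_infinitePi_of_inj (P := fun _ : ℕ => p) (add_left_injective 1)⟩

lemma ergodic_leftShift_infinitePi :
    Ergodic leftShift (Measure.infinitePi fun _ : ℕ => p) := by
  refine ⟨measurePreserving_leftShift_infinitePi p, ⟨fun A hA hinv => ?_⟩⟩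
  -- An invariant set depends only on the coordinates `≥ k`, for every `k`: it is a tail event.
  have htail : MeasurableSet[limsup (fun i => MeasurableSpace.comap (fun ω : ℕ → α => ω i)
      inferInstance) atTop] A := by
    rw [limsup_eq_iInf_iSup_of_nat, MeasurableSpace.measurableSet_iInf]
    intro k
    rw [← Function.IsFixedPt.preimage_iterate hinv k]
    refine @measurable_pi_lambda _ _ _ (_) _ leftShift^[k] (fun i => ?_) _ hA
    simp only [leftShift_iterate_apply]
    refine Measurable.mono (comap_measurable fun ω : ℕ → α => ω (i + k)) ?_ le_rfl
    exact le_iSup₂_of_le (i + k) (Nat.le_add_left k i) le_rfl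
  have hindep := ProbabilityTheory.iIndepFun_infinitePi (P := fun _ : ℕ => p) (X := fun _ a => a)
    fun _ => measurable_id
  have hzeroOne := ProbabilityTheory.measure_zero_or_one_of_measurableSet_limsup_atTop
    (fun i => (measurable_pi_apply i).comap_le) hindep htail
  rwa [eventuallyConst_set', ae_eq_empty, ae_eq_univ_iff_measure_eq hA.nullMeasurableSet,
    measure_univ]

lemma shannonEntropy_window_infinitePi [Fintype α] [MeasurableSingletonClass α] (s q : ℕ) :
    shannonEntropy (Measure.infinitePi fun _ : ℕ => p) (window s q) =
      q * shannonEntropy p id := by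
  have hindep := (ProbabilityTheory.iIndepFun_infinitePi (P := fun _ : ℕ => p)
    (X := fun _ a => a) fun _ => measurable_id).precomp (g := fun i : Fin q => s + (i : ℕ))
    fun i j h => Fin.ext (Nat.add_left_cancel h)
  have hcoord (i : ℕ) :
      shannonEntropy (Measure.infinitePi fun _ : ℕ => p) (fun ω => ω i) = shannonEntropy p id := by
    conv_rhs => rw [← Measure.infinitePi_map_eval (fun _ : ℕ => p) i]
    rw [shannonEntropy_map (f := fun ω : ℕ → α => ω i) (measurable_pi_apply i) measurable_id]
    rfl
  calc shannonEntropy (Measure.infinitePi fun _ : ℕ => p) (window s q)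
      = ∑ i : Fin q, shannonEntropy (Measure.infinitePi fun _ : ℕ => p) (fun ω => ω (s + i)) :=
        shannonEntropy_pi (fun _ => measurable_pi_apply _) hindep
    _ = q * shannonEntropy p id := by
        simp only [hcoord, Finset.sum_const, Finset.card_univ, Fintype.card_fin, nsmul_eq_mul]

end InfiniteProduct

section Concatenation

variable {α : Type*} {n : ℕ} [NeZero n]

/-- The infinite word obtained by concatenating a sequence of words of length `n`. -/
def concat (ω : ℕ → Fin n → α) : ℕ → α := fun i => ω (i / n) (Fin.ofNat n i)

/-- Reading a list of `q` words of length `n` as one word of length `q * n`. -/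
def joinEquiv (q n : ℕ) (α : Type*) : (Fin q → Fin n → α) ≃ (Fin (q * n) → α) :=
  (Equiv.curry _ _ _).symm.trans (finProdFinEquiv.arrowCongr (Equiv.refl α))

lemma concat_mul_add (ω : ℕ → Fin n → α) (s i : ℕ) :
    concat ω (s * n + i) = ω (s + i / n) (Fin.ofNat n i) := by
  have hmod : Fin.ofNat n (s * n + i) = Fin.ofNat n i := Fin.ext (by simp [Fin.ofNat])
  rw [concat, hmod, mul_comm, Nat.mul_add_div (Nat.pos_of_neZero n)]

lemma semiconj_concat :
    Function.Semiconj (concat : (ℕ → Fin n → α) → _) leftShift leftShift^[n] := by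
  intro ω
  ext i
  have h := concat_mul_add ω 1 i
  rw [one_mul] at h
  rw [leftShift_iterate_apply, add_comm i n, h, concat, leftShift, add_comm 1]

lemma window_zero_comp_concat :
    window 0 n ∘ concat = fun ω : ℕ → Fin n → α => ω 0 := by
  ext ω i
  simp only [Function.comp_apply, window, concat, zero_add, Nat.div_eq_of_lt i.2,
    Fin.ofNat_eq_cast, Fin.cast_val_eq_self]

lemma window_mul_comp_concat (s q : ℕ) :
    window (s * n) (q * n) ∘ concat = joinEquiv q n α ∘ window s q := by
  ext ω i
  simp only [Function.comp_apply, window, concat_mul_add]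
  rfl

variable [MeasurableSpace α]

@[fun_prop]
lemma measurable_concat : Measurable (concat : (ℕ → Fin n → α) → _) := by
  unfold concat; fun_prop

variable (p : Measure (Fin n → α)) [IsProbabilityMeasure p]

/-- The law of the concatenation of independent words of length `n` with common law `p`. -/
noncomputable def concatLaw : Measure (ℕ → α) :=
  (Measure.infinitePi fun _ : ℕ => p).map concat

instance : IsProbabilityMeasure (concatLaw p) :=
  Measure.isProbabilityMeasure_map (by fun_prop)

lemma ergodic_concatLaw : Ergodic leftShift^[n] (concatLaw p) :=
  MeasurePreserving.ergodic_of_ergodic_semiconj (measurable_concat.measurePreserving _)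
    (ergodic_leftShift_infinitePi p) (measurable_leftShift.iterate n) semiconj_concat

lemma map_window_concatLaw : (concatLaw p).map (window 0 n) = p := by
  rw [concatLaw, Measure.map_map (by fun_prop) (by fun_prop), window_zero_comp_concat]
  exact Measure.infinitePi_map_eval (fun _ : ℕ => p) 0

variable [Fintype α] [MeasurableSingletonClass α]

lemma shannonEntropy_window_mul_concatLaw (s q : ℕ) :
    shannonEntropy (concatLaw p) (window (s * n) (q * n)) = q * shannonEntropy p id := by
  rw [concatLaw, shannonEntropy_map (by fun_prop) (by fun_prop), window_mul_comp_concat,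
    shannonEntropy_equiv_comp, shannonEntropy_window_infinitePi]

lemma shannonEntropy_window_concatLaw_le {k m q : ℕ} (h : k + m ≤ q * n) :
    shannonEntropy (concatLaw p) (window k m) ≤ q * shannonEntropy p id := by
  rw [← shannonEntropy_window_mul_concatLaw p 0 q]
  exact shannonEntropy_window_mono _ (by omega) (by omega)

lemma le_shannonEntropy_window_concatLaw {k m s q : ℕ} (hs : k ≤ s * n)
    (hq : (s + q) * n ≤ k + m) :
    q * shannonEntropy p id ≤ shannonEntropy (concatLaw p) (window k m) := by
  rw [← shannonEntropy_window_mul_concatLaw p s q]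
  exact shannonEntropy_window_mono _ hs (by rwa [← add_mul])

end Concatenation

section BlockMeasure

open scoped BigOperators

variable {α : Type*} [MeasurableSpace α] {n : ℕ} [NeZero n]
  (p : Measure (Fin n → α)) [IsProbabilityMeasure p]

/-- The stationary measure generated by independent words of length `n` with law `p`: the law of
their concatenation, read from a uniformly distributed starting position in `{0, …, n - 1}`. -/
noncomputable def blockMeasure : Measure (ℕ → α) :=
  orbitAverage leftShift n (concatLaw p)

instance : IsProbabilityMeasure (blockMeasure p) :=
  isProbabilityMeasure_orbitAverage measurable_leftShift

lemma ergodic_blockMeasure : Ergodic leftShift (blockMeasure p) :=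
  ergodic_orbitAverage measurable_leftShift (ergodic_concatLaw p)

lemma measureReal_blockMeasure_window (m : ℕ) {A : Set (Fin m → α)} (hA : MeasurableSet A) :
    (blockMeasure p).real (window 0 m ⁻¹' A) =
      𝔼 k ∈ Finset.range n, (concatLaw p).real (window k m ⁻¹' A) := by
  rw [blockMeasure, measureReal_orbitAverage measurable_leftShift (measurable_window 0 m hA)]
  simp only [← preimage_comp, window_comp_leftShift_iterate, add_zero]

section Entropy

variable [Fintype α] [MeasurableSingletonClass α]

lemma shannonEntropy_window_blockMeasure_le (m : ℕ) :
    shannonEntropy (blockMeasure p) (window 0 m) ≤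
      (m / n + 2) * shannonEntropy p id + Real.log n := by
  have hn : 0 < n := Nat.pos_of_neZero n
  refine (shannonEntropy_orbitAverage_le measurable_leftShift (measurable_window 0 m)).trans
    (add_le_add_left (Finset.expect_le (Finset.nonempty_range_iff.2 hn.ne') fun k hk => ?_) _)
  have hcover : k + m ≤ (m / n + 2) * n := by
    have := Nat.div_add_mod m n
    have := Nat.mod_lt m hn
    have := Finset.mem_range.1 hk
    linarith
  rw [window_comp_leftShift_iterate, add_zero]
  refine (shannonEntropy_window_concatLaw_le p hcover).trans ?_
  refine mul_le_mul_of_nonneg_right ?_ (shannonEntropy_nonneg id)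
  push_cast
  gcongr
  exact Nat.cast_div_le

lemma le_shannonEntropy_window_blockMeasure {m : ℕ} (hm : n ≤ m) :
    (m / n - 2) * shannonEntropy p id ≤ shannonEntropy (blockMeasure p) (window 0 m) := by
  have hn : 0 < n := Nat.pos_of_neZero n
  have hone : 1 ≤ m / n := (Nat.one_le_div_iff hn).2 hm
  refine le_trans (Finset.le_expect (Finset.nonempty_range_iff.2 hn.ne') fun k hk => ?_)
    (expect_shannonEntropy_le_shannonEntropy_orbitAverage measurable_leftShift
      (measurable_window 0 m))
  have hstart : k ≤ 1 * n := by rw [one_mul]; exact (Finset.mem_range.1 hk).le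
  have hend : (1 + (m / n - 1)) * n ≤ k + m := by
    rw [Nat.add_sub_cancel' hone]
    exact (Nat.div_mul_le_self m n).trans (Nat.le_add_left m k)
  rw [window_comp_leftShift_iterate, add_zero]
  refine le_trans ?_ (le_shannonEntropy_window_concatLaw p hstart hend)
  refine mul_le_mul_of_nonneg_right ?_ (shannonEntropy_nonneg id)
  have hfloor : (m : ℝ) / n < (m / n : ℕ) + 1 := by
    rw [div_lt_iff₀ (by positivity)]
    exact_mod_cast Nat.lt_mul_of_div_lt (Nat.lt_succ_self _) hn
  rw [Nat.cast_sub hone, Nat.cast_one]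
  linarith

lemma tendsto_shannonEntropy_window_blockMeasure_div :
    Tendsto (fun m : ℕ => shannonEntropy (blockMeasure p) (window 0 m) / m) atTop
      (𝓝 (shannonEntropy p id / n)) := by
  have hn : (n : ℝ) ≠ 0 := NeZero.ne _
  have hlim (c : ℝ) : Tendsto (fun m : ℕ => shannonEntropy p id / n + c / m) atTop
      (𝓝 (shannonEntropy p id / n)) := by
    simpa using tendsto_const_nhds.add (tendsto_const_div_atTop_nhds_zero_nat c)
  refine tendsto_of_tendsto_of_tendsto_of_le_of_le' (hlim (-2 * shannonEntropy p id))
    (hlim (2 * shannonEntropy p id + Real.log n)) ?_ ?_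
  all_goals
    filter_upwards [eventually_gt_atTop 0, eventually_ge_atTop n] with m hpos hm
    have hpos' : (0 : ℝ) < m := by exact_mod_cast hpos
  · rw [le_div_iff₀ hpos']
    refine le_of_eq_of_le ?_ (le_shannonEntropy_window_blockMeasure p hm)
    field_simp
    ring
  · rw [div_le_iff₀ hpos']
    refine (shannonEntropy_window_blockMeasure_le p m).trans_eq ?_
    field_simp
    ring

end Entropy

end BlockMeasure

section WeakConvergence

open scoped BigOperators

lemma abs_expect_range_le_div {n L : ℕ} {x : ℕ → ℝ} (hx : ∀ k, |x k| ≤ 1)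
    (hzero : ∀ k, k + L ≤ n → x k = 0) : |𝔼 k ∈ Finset.range n, x k| ≤ L / n := by
  rw [Finset.expect_eq_sum_div_card, Finset.card_range, abs_div, Nat.abs_cast]
  gcongr
  calc |∑ k ∈ Finset.range n, x k|
      = |∑ k ∈ Finset.Ico (n - L) n, x k| := by
        congr 1
        refine (Finset.sum_subset (fun k hk => ?_) fun k _ hk => hzero k ?_).symm
        · exact Finset.mem_range.2 (Finset.mem_Ico.1 hk).2
        · simp only [Finset.mem_range, Finset.mem_Ico] at *
          omega
    _ ≤ ∑ k ∈ Finset.Ico (n - L) n, |x k| := Finset.abs_sum_le_sum_abs _ _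
    _ ≤ (Finset.Ico (n - L) n).card • (1 : ℝ) := Finset.sum_le_card_nsmul _ _ _ fun k _ => hx k
    _ ≤ L := by
        rw [Nat.card_Ico, nsmul_one]
        exact_mod_cast (by omega : n - (n - L) ≤ L)

lemma tendsto_of_forall_mem_measurableCylinders {ι κ : Type*} [Countable ι] {X : ι → Type*}
    [∀ i, TopologicalSpace (X i)] [∀ i, SecondCountableTopology (X i)]
    [∀ i, MeasurableSpace (X i)] [∀ i, OpensMeasurableSpace (X i)]
    {l : Filter κ} [l.IsCountablyGenerated] {μs : κ → ProbabilityMeasure (∀ i, X i)}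
    {μ : ProbabilityMeasure (∀ i, X i)}
    (h : ∀ A ∈ measurableCylinders X, Tendsto (fun j => μs j A) l (𝓝 (μ A))) :
    Tendsto μs l (𝓝 μ) := by
  refine IsPiSystem.tendsto_probabilityMeasure_of_tendsto_of_mem isPiSystem_measurableCylinders
    (fun _ hA => MeasurableSet.of_mem_measurableCylinders hA) (fun U hU x hx => ?_) h
  obtain ⟨I, V, hV, hVU⟩ := isOpen_pi_iff.1 hU x hx
  refine ⟨(I : Set ι).pi V, ?_, ?_, hVU⟩
  · refine (mem_measurableCylinders _).2 ⟨I, univ.pi fun i : I => V i,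
      .univ_pi fun i => (hV i i.2).1.measurableSet, ?_⟩
    ext y
    simp
  · exact set_pi_mem_nhds I.finite_toSet fun i hi => (hV i hi).1.mem_nhds (hV i hi).2

variable {α : Type*} [MeasurableSpace α]

lemma exists_eq_window_preimage_of_mem_measurableCylinders {A : Set (ℕ → α)}
    (hA : A ∈ measurableCylinders fun _ : ℕ => α) :
    ∃ (L : ℕ) (B : Set (Fin L → α)), MeasurableSet B ∧ A = window 0 L ⁻¹' B := by
  obtain ⟨I, S, hS, rfl⟩ := (mem_measurableCylinders A).1 hA
  obtain ⟨L, hL⟩ := I.exists_nat_subset_range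
  let restrict (a : Fin L → α) (i : I) : α := a ⟨i, Finset.mem_range.1 (hL i.2)⟩
  have hrestrict : Measurable restrict := by fun_prop
  refine ⟨L, restrict ⁻¹' S, hrestrict hS, ?_⟩
  rw [MeasureTheory.cylinder, ← preimage_comp]
  congr 1
  ext x i
  simp only [restrict, Function.comp_apply, window, zero_add]
  rfl

variable {μ : Measure (ℕ → α)} [IsProbabilityMeasure μ]

lemma map_window_concatLaw_map_window (hμ : MeasurePreserving leftShift μ μ) {n k L : ℕ}
    [NeZero n] (h : k + L ≤ n) :
    (concatLaw (μ.map (window 0 n))).map (window k L) = μ.map (window 0 L) := by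
  rw [← map_window_of_measurePreserving hμ k L]
  exact map_window_eq_of_map_window_eq (Nat.zero_le k) (by omega) (map_window_concatLaw _)

lemma abs_measureReal_blockMeasure_sub_le (hμ : MeasurePreserving leftShift μ μ) (n : ℕ) [NeZero n]
    {L : ℕ} {B : Set (Fin L → α)} (hB : MeasurableSet B) :
    |(blockMeasure (μ.map (window 0 n))).real (window 0 L ⁻¹' B) - μ.real (window 0 L ⁻¹' B)| ≤
      L / n := by
  have hrange : (Finset.range n).Nonempty := Finset.nonempty_range_iff.2 (NeZero.ne n)
  rw [measureReal_blockMeasure_window _ _ hB, ← Finset.expect_const hrange (μ.real _),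
    ← Finset.expect_sub_distrib]
  refine abs_expect_range_le_div (fun k => ?_) fun k hk => ?_
  · exact abs_sub_le_of_nonneg_of_le measureReal_nonneg measureReal_le_one
      measureReal_nonneg measureReal_le_one
  · rw [← map_measureReal_apply (by fun_prop) hB, ← map_measureReal_apply (by fun_prop) hB,
      map_window_concatLaw_map_window hμ hk, sub_self]

/-- The ergodic approximation of `μ` of order `n`: the stationary measure generated by
independent words of length `n`, each distributed as the first `n` letters under `μ`. -/
noncomputable def blockApprox (μ : ProbabilityMeasure (ℕ → α)) (n : ℕ) [NeZero n] :
    ProbabilityMeasure (ℕ → α) :=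
  ⟨blockMeasure (μ.toMeasure.map (window 0 n)), inferInstance⟩

lemma tendsto_blockApprox [TopologicalSpace α] [SecondCountableTopology α]
    [OpensMeasurableSpace α] {μ : ProbabilityMeasure (ℕ → α)}
    (hμ : MeasurePreserving leftShift μ.toMeasure μ.toMeasure) :
    Tendsto (fun n => blockApprox μ (n + 1)) atTop (𝓝 μ) := by
  refine tendsto_of_forall_mem_measurableCylinders fun A hA => ?_
  obtain ⟨L, B, hB, rfl⟩ := exists_eq_window_preimage_of_mem_measurableCylinders hA
  rw [← NNReal.tendsto_coe, tendsto_iff_norm_sub_tendsto_zero]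
  exact squeeze_zero (fun _ => norm_nonneg _)
    (fun n => abs_measureReal_blockMeasure_sub_le hμ (n + 1) hB)
    ((tendsto_const_div_atTop_nhds_zero_nat (L : ℝ)).comp (tendsto_add_atTop_nat 1))

end WeakConvergence

section FullShift

variable {N : ℕ} (μ : ProbabilityMeasure (Seq N))

lemma entropyAux_eq_shannonEntropy (n : ℕ) :
    entropyAux μ n = shannonEntropy μ.toMeasure (window 0 n) := by
  have hcylinder (w : Fin n → Fin N) : cylinder (List.ofFn w) = window 0 n ⁻¹' {w} := by
    ext x
    simp only [cylinder, mem_ofPred_eq, List.length_ofFn, List.get_ofFn, mem_preimage,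
      mem_singleton_iff, funext_iff, window, zero_add]
    exact ⟨fun h i => h i i.2, fun h k hk => h ⟨k, hk⟩⟩
  simp only [entropyAux, shannonEntropy, hcylinder, Real.negMulLog, neg_mul,
    Finset.sum_neg_distrib]
  rfl

lemma entropyAux_nonneg (n : ℕ) : 0 ≤ entropyAux μ n :=
  entropyAux_eq_shannonEntropy μ n ▸ shannonEntropy_nonneg _

lemma entropyAux_le (n : ℕ) : entropyAux μ n ≤ n * Real.log N := by
  rw [entropyAux_eq_shannonEntropy]
  exact (shannonEntropy_le_log_card (measurable_window 0 n)).trans_eq (by simp)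

lemma entropy_blockApprox (n : ℕ) [NeZero n] :
    entropy (blockApprox μ n) = entropyAux μ n / n := by
  have hblock : shannonEntropy (μ.toMeasure.map (window 0 n)) id = entropyAux μ n := by
    rw [entropyAux_eq_shannonEntropy, shannonEntropy_map (by fun_prop) measurable_id]
    rfl
  rw [entropy, ← hblock]
  simp only [entropyAux_eq_shannonEntropy]
  exact (tendsto_shannonEntropy_window_blockMeasure_div _).liminf_eq

lemma exists_strictMono_tendsto_entropy :
    ∃ φ : ℕ → ℕ, StrictMono φ ∧
      Tendsto (fun j => entropyAux μ (φ j + 1) / (φ j + 1 : ℕ)) atTop (𝓝 (entropy μ)) := by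
  set u : ℕ → ℝ := fun n => entropyAux μ (n + 1) / (n + 1 : ℕ) with hu
  have hbelow : IsBoundedUnder (· ≥ ·) atTop u :=
    isBoundedUnder_of ⟨0, fun n => div_nonneg (entropyAux_nonneg μ _) (Nat.cast_nonneg _)⟩
  have habove : IsBoundedUnder (· ≤ ·) atTop u := by
    refine isBoundedUnder_of ⟨Real.log N, fun n => ?_⟩
    rw [hu, div_le_iff₀ (by positivity), mul_comm]
    exact entropyAux_le μ (n + 1)
  rw [entropy, ← liminf_nat_add _ 1]
  exact MapClusterPt.tendsto_subseq (MapClusterPt.liminf habove.isCoboundedUnder_ge hbelow)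

end FullShift

theorem ergodic_approximation_general {N : ℕ} (μ : ProbabilityMeasure (Seq N))
    (hinv : Invariant μ) :
    ∃ μs : ℕ → ProbabilityMeasure (Seq N),
      (∀ n, Invariant (μs n)) ∧
      Tendsto μs atTop (𝓝 μ) ∧
      (∀ n, Ergodic shift (μs n).toMeasure) ∧
      Tendsto (fun n => entropy (μs n)) atTop (𝓝 (entropy μ)) := by
  have hμ : MeasurePreserving leftShift μ.toMeasure μ.toMeasure := ⟨measurable_leftShift, hinv⟩
  have hergodic (n : ℕ) [NeZero n] : Ergodic shift (blockApprox μ n).toMeasure :=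
    ergodic_blockMeasure _
  obtain ⟨φ, hφ, hentropy⟩ := exists_strictMono_tendsto_entropy μ
  refine ⟨fun j => blockApprox μ (φ j + 1), fun j => (hergodic _).map_eq,
    (tendsto_blockApprox hμ).comp hφ.tendsto_atTop, fun j => hergodic _, ?_⟩
  simpa only [entropy_blockApprox] using hentropy

/-- **Lemma 6.3.**  Every shift-invariant probability measure on the full shift with full
topological support is the weak limit of a sequence of ergodic shift-invariant probability
measures whose entropies converge to the entropy of the given measure. -/
theorem ergodic_approximation
    {N : ℕ} (hN : 0 < N) (μ : ProbabilityMeasure (Seq N))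
    (hinv : Invariant μ)
    (hsupp : ∀ O : Set (Seq N), IsOpen O → O.Nonempty → 0 < μ.toMeasure O) :
    ∃ μs : ℕ → ProbabilityMeasure (Seq N),
      (∀ n, Invariant (μs n)) ∧
      Filter.Tendsto μs Filter.atTop (nhds μ) ∧
      (∀ n, Ergodic shift (μs n).toMeasure) ∧
      Filter.Tendsto (fun n => entropy (μs n)) Filter.atTop (nhds (entropy μ)) :=
  ergodic_approximation_general μ hinv

end Multifractal
end

section
/- Equip Σ^ℕ with the metric d(i,j) = s_{i∧j} for i ≠ j (and d(i,i) = 0), where i∧j ∈ Σ* is the longest common prefix of i and j. Let μ be an ergodic shift-invariant Borel probability measure on Σ^ℕ. Then the upper Hausdorff dimension of μ, defined by dim̄_H μ = inf{ dim_H Ξ : Ξ ⊆ Σ^ℕ, μ(Ξ) = 1 }, equals −h(μ)/∫Λ dμ. -/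
open MeasureTheory Filter Topology Metric Set
open scoped ENNReal NNReal Classical

namespace Multifractal

/-- The metric `d(i,j) = s_{i∧j}` on `Σ^ℕ` (where `i∧j` is the longest common prefix),
with `d(i,i) = 0`. -/
noncomputable def treeDist {N : ℕ} (Λ : Seq N → ℝ) (i j : Seq N) : ℝ :=
  if i = j then 0
  else sWord Λ (List.ofFn fun k : Fin (sSup {n : ℕ | ∀ m < n, i m = j m}) => i k)

/-- Diameter of a set with respect to `treeDist`. -/
noncomputable def treeDiam {N : ℕ} (Λ : Seq N → ℝ) (A : Set (Seq N)) : ℝ≥0∞ :=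
  ⨆ (i ∈ A) (j ∈ A), ENNReal.ofReal (treeDist Λ i j)

/-- The `t`-dimensional Hausdorff (outer) measure with respect to `treeDist`. -/
noncomputable def treeHMeasure {N : ℕ} (Λ : Seq N → ℝ) (t : ℝ) (E : Set (Seq N)) : ℝ≥0∞ :=
  ⨆ (δ : ℝ≥0∞) (_ : 0 < δ),
    ⨅ (f : ℕ → Set (Seq N)) (_ : E ⊆ ⋃ n, f n) (_ : ∀ n, treeDiam Λ (f n) ≤ δ),
      ∑' n, treeDiam Λ (f n) ^ t

/-- The Hausdorff dimension with respect to `treeDist`. -/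
noncomputable def treeDimH {N : ℕ} (Λ : Seq N → ℝ) (E : Set (Seq N)) : ℝ≥0∞ :=
  ⨆ (t : ℝ≥0) (_ : treeHMeasure Λ t E = ⊤), (t : ℝ≥0∞)

end Multifractal

namespace Multifractal

/-!
Write `S_n f` for Birkhoff sums and let `H(f)` be the set of strings whose cylinders of level `n`
have, for infinitely many `n`, mass at least a multiple of `exp (S_n f)`. By ergodicity `H(f)` has
measure zero or one, and comparing `h(μ)` with `-∫ f dμ` decides which. If `H(f)` is null, then
`-log μ[x|n] + S_n f` is eventually positive almost surely, so `h(μ) ≥ -∫ f dμ` by Fatou's lemma.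
If `H(f)` has full measure, then almost every orbit can be parsed greedily into heavy words; the
weights this assigns to words of length `n` have total mass at most one, and Gibbs' inequality
gives `h(μ) ≤ -∫ f dμ`. This dichotomy stands in for the Shannon–McMillan–Breiman theorem.

For `f = sΛ` the number `exp (S_n f)` is comparable to the `s`-th power of the diameter of the
cylinder. Hence the heavy cylinders are efficient covers showing that `H(sΛ)` has dimension at most
`s`, while a set of full measure has dimension at least `s` by the mass distribution principle
whenever `H(sΛ)` is null.
-/

section Preliminaries

variable {X : Type*} {T : X → X} {f : X → ℝ}

lemma birkhoffSum_le {b : ℝ} (hf : ∀ x, f x ≤ b) (n : ℕ) (x : X) :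
    birkhoffSum T f n x ≤ n * b := by
  simpa [birkhoffSum] using
    Finset.sum_le_card_nsmul (Finset.range n) _ b fun k _ => hf (T^[k] x)

lemma le_birkhoffSum {b : ℝ} (hf : ∀ x, b ≤ f x) (n : ℕ) (x : X) :
    n * b ≤ birkhoffSum T f n x := by
  simpa [birkhoffSum] using
    Finset.card_nsmul_le_sum (Finset.range n) _ b fun k _ => hf (T^[k] x)

lemma birkhoffSum_smul (s : ℝ) (n : ℕ) (x : X) :
    birkhoffSum T (s • f) n x = s * birkhoffSum T f n x := by
  simp [birkhoffSum, Finset.mul_sum]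

variable [MeasurableSpace X] {μ : Measure X}

lemma measurable_birkhoffSum (hT : Measurable T) (hf : Measurable f) (n : ℕ) :
    Measurable (birkhoffSum T f n) :=
  Finset.measurable_fun_sum _ fun k _ => hf.comp (hT.iterate k)

lemma integrable_birkhoffSum (hT : MeasurePreserving T μ μ) (hf : Integrable f μ) (n : ℕ) :
    Integrable (birkhoffSum T f n) μ :=
  integrable_finsetSum _ fun k _ => (hT.iterate k).integrable_comp_of_integrable hf

lemma integral_birkhoffSum (hT : MeasurePreserving T μ μ) (hf : Integrable f μ) (n : ℕ) :
    ∫ x, birkhoffSum T f n x ∂μ = n * ∫ x, f x ∂μ := by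
  have integral_iterate (k : ℕ) : ∫ x, f (T^[k] x) ∂μ = ∫ x, f x ∂μ := by
    have hk := hT.iterate k
    rw [← integral_map hk.aemeasurable (by rw [hk.map_eq]; exact hf.1), hk.map_eq]
  simp only [birkhoffSum]
  rw [integral_finsetSum _ fun k _ => ?_]
  · simp [integral_iterate]
  · exact (hT.iterate k).integrable_comp_of_integrable hf

lemma nonneg_of_frequently_integral_le {g : ℕ → X → ℝ} {h : X → ℝ} {q : ℝ}
    (hg : ∀ n, Integrable (g n) μ) (hh : Integrable h μ) (hle : ∀ n x, h x ≤ g n x)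
    (hnonneg : ∀ᵐ x ∂μ, ∀ᶠ n in atTop, 0 ≤ g n x)
    (hq : ∃ᶠ n in atTop, ∫ x, g n x ∂μ ≤ q) : 0 ≤ q := by
  have integral_neg_le : ENNReal.ofReal (-∫ x, h x ∂μ) ≤ ∫⁻ x, ENNReal.ofReal (-h x) ∂μ := by
    rw [← integral_neg]
    refine (ENNReal.ofReal_le_ofReal
      (integral_mono hh.neg hh.neg.pos_part fun x => le_max_left _ 0)).trans_eq ?_
    rw [ofReal_integral_eq_lintegral_ofReal hh.neg.pos_part (.of_forall fun x => le_max_right _ _)]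
    simp
  have le_liminf : ∫⁻ x, ENNReal.ofReal (-h x) ∂μ
      ≤ ∫⁻ x, atTop.liminf (fun n => ENNReal.ofReal (g n x - h x)) ∂μ := by
    refine lintegral_mono_ae (hnonneg.mono fun x hx => le_liminf_of_le (by isBoundedDefault) ?_)
    filter_upwards [hx] with n hn
    exact ENNReal.ofReal_le_ofReal (by linarith)
  have lintegral_eq (n : ℕ) : ∫⁻ x, ENNReal.ofReal (g n x - h x) ∂μ
      = ENNReal.ofReal (∫ x, g n x ∂μ - ∫ x, h x ∂μ) := by
    rw [← integral_sub (hg n) hh]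
    exact (ofReal_integral_eq_lintegral_ofReal ((hg n).sub hh)
      (.of_forall fun x => sub_nonneg.2 (hle n x))).symm
  have liminf_le : atTop.liminf (fun n => ∫⁻ x, ENNReal.ofReal (g n x - h x) ∂μ)
      ≤ ENNReal.ofReal (q - ∫ x, h x ∂μ) := by
    refine liminf_le_of_frequently_le (hq.mono fun n hn => ?_) (by isBoundedDefault)
    rw [lintegral_eq]
    exact ENNReal.ofReal_le_ofReal (by linarith)
  have fatou : ∫⁻ x, atTop.liminf (fun n => ENNReal.ofReal (g n x - h x)) ∂μ
      ≤ atTop.liminf (fun n => ∫⁻ x, ENNReal.ofReal (g n x - h x) ∂μ) :=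
    lintegral_liminf_le' fun n => ((hg n).sub hh).aemeasurable.ennreal_ofReal
  have hqh : 0 ≤ q - ∫ x, h x ∂μ := by
    obtain ⟨n, hn⟩ := hq.exists
    linarith [integral_mono hh (hg n) (hle n)]
  have := (ENNReal.ofReal_le_ofReal_iff hqh).1
    (integral_neg_le.trans (le_liminf.trans (fatou.trans liminf_le)))
  linarith

section DependsOn

variable {ι β : Type*} {α : ι → Type*} [∀ i, MeasurableSpace (α i)]
  [∀ i, MeasurableSingletonClass (α i)] {s : Set ι} [Finite s]

lemma measurable_of_dependsOn [∀ i, Countable (α i)] [MeasurableSpace β] [Nonempty β]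
    {F : (Π i, α i) → β} (hF : DependsOn F s) : Measurable F := by
  obtain ⟨G, rfl⟩ := dependsOn_iff_exists_comp.1 hF
  exact (measurable_of_countable G).comp (measurable_pi_lambda _ fun i => measurable_pi_apply i.1)

lemma integrable_of_dependsOn [∀ i, Finite (α i)] [NormedAddCommGroup β]
    {ν : Measure (Π i, α i)} [IsFiniteMeasure ν] {F : (Π i, α i) → β} (hF : DependsOn F s) :
    Integrable F ν := by
  obtain ⟨G, rfl⟩ := dependsOn_iff_exists_comp.1 hF
  exact Integrable.of_finite.comp_measurable
    (measurable_pi_lambda _ fun i => measurable_pi_apply i.1)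

end DependsOn

end Preliminaries

section Words

variable {N m n : ℕ}

/-- The infinite string obtained by writing the word `w` in front of `z`. -/
def prepend (w : Fin n → Fin N) (z : Seq N) : Seq N :=
  fun k => if h : k < n then w ⟨k, h⟩ else z (k - n)

/-- The sum of `F` over all strings `wz` with `w` a word of length `n`; for `F` depending only on
the first `n` letters this is the sum of `F` over the cylinders of level `n`. -/
noncomputable def wordSum (n : ℕ) (F : Seq N → ℝ) (z : Seq N) : ℝ :=
  ∑ w : Fin n → Fin N, F (prepend w z)

lemma shift_iterate_apply (n k : ℕ) (x : Seq N) : shift^[n] x k = x (k + n) := by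
  induction n generalizing x with
  | zero => rfl
  | succ n ih => rw [Function.iterate_succ_apply, ih, shift, add_assoc]

lemma shift_iterate_prepend (w : Fin n → Fin N) (z : Seq N) : shift^[n] (prepend w z) = z := by
  ext k
  simp [shift_iterate_apply, prepend]

lemma prepend_apply (w : Fin n → Fin N) (z : Seq N) (i : Fin n) : prepend w z i = w i := by
  simp [prepend]

lemma prepend_mem_cylinder (x z : Seq N) :
    prepend (fun i : Fin n => x i) z ∈ PiNat.cylinder x n :=
  fun k hk => prepend_apply (fun i : Fin n => x i) z ⟨k, hk⟩

lemma prepend_append (u : Fin m → Fin N) (v : Fin n → Fin N) (z : Seq N) :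
    prepend (Fin.append u v) z = prepend u (prepend v z) := by
  ext k
  by_cases hm : k < m
  · simp [prepend, hm, Nat.lt_add_right, Fin.append, Fin.addCases]
  · by_cases hn : k < m + n
    · simp [prepend, hm, hn, Fin.append, Fin.addCases, show k - m < n by omega]
    · simp [prepend, hm, hn, show ¬ k - m < n by omega, Nat.sub_sub]

lemma cylinder_ofFn (x : Seq N) (n : ℕ) :
    cylinder (List.ofFn fun i : Fin n => x i) = PiNat.cylinder x n := by
  ext y
  simp [cylinder, PiNat.mem_cylinder_iff]

lemma dependsOn_comp_shift {F : Seq N → ℝ} (hF : DependsOn F (Iio n)) (m : ℕ) :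
    DependsOn (fun x => F (shift^[m] x)) (Iio (m + n)) := fun x y hxy => hF fun k hk => by
  simp only [shift_iterate_apply]
  exact hxy _ (by simp only [mem_Iio] at hk ⊢; omega)

variable {F G : Seq N → ℝ}

lemma wordSum_mono (hFG : ∀ x, F x ≤ G x) (z : Seq N) : wordSum n F z ≤ wordSum n G z :=
  Finset.sum_le_sum fun _ _ => hFG _

lemma wordSum_const (n : ℕ) (a : ℝ) (z : Seq N) : wordSum n (fun _ => a) z = N ^ n * a := by
  simp [wordSum]

lemma wordSum_const_mul (n : ℕ) (a : ℝ) (F : Seq N → ℝ) (z : Seq N) :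
    wordSum n (fun x => a * F x) z = a * wordSum n F z := by
  simp only [wordSum, Finset.mul_sum]

lemma wordSum_mul_comp_shift (m n : ℕ) (F G : Seq N → ℝ) (z : Seq N) :
    wordSum (m + n) (fun x => F x * G (shift^[m] x)) z
      = wordSum n (fun y => wordSum m F y * G y) z := by
  simp only [wordSum]
  rw [← (Fin.appendEquiv m n).sum_comp, Fintype.sum_prod_type_right]
  simp [Fin.appendEquiv, prepend_append, shift_iterate_prepend, Finset.sum_mul]

end Words

section Information

variable {N : ℕ} (μ : Measure (Seq N))

/-- The mass of the cylinder of level `n` around `x`. -/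
noncomputable def cylMass (n : ℕ) (x : Seq N) : ℝ := μ.real (PiNat.cylinder x n)

/-- The information function of the partition into cylinders of level `n`. -/
noncomputable def information (n : ℕ) (x : Seq N) : ℝ := -Real.log (cylMass μ n x)

lemma cylMass_nonneg (n : ℕ) (x : Seq N) : 0 ≤ cylMass μ n x := measureReal_nonneg

lemma dependsOn_cylMass (n : ℕ) : DependsOn (cylMass μ n) (Iio n) := fun x y hxy => by
  rw [cylMass, cylMass, PiNat.mem_cylinder_iff_eq.1 fun k hk => hxy k hk]

lemma dependsOn_information (n : ℕ) : DependsOn (information μ n) (Iio n) := fun x y hxy => by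
  simp only [information, dependsOn_cylMass μ n hxy]

lemma measurable_cylMass (n : ℕ) : Measurable (cylMass μ n) :=
  measurable_of_dependsOn (dependsOn_cylMass μ n)

lemma map_measureReal_singleton {n : ℕ} (w : Fin n → Fin N) (z : Seq N) :
    (μ.map fun (x : Seq N) (i : Fin n) => x i).real {w} = cylMass μ n (prepend w z) := by
  rw [cylMass, map_measureReal_apply (by fun_prop) (measurableSet_singleton w)]
  congr 1
  ext x
  simp +contextual [PiNat.mem_cylinder_iff, funext_iff, Fin.forall_iff, prepend]

variable [IsProbabilityMeasure μ] {n : ℕ} {F : Seq N → ℝ}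

lemma integrable_information (n : ℕ) : Integrable (information μ n) μ :=
  integrable_of_dependsOn (dependsOn_information μ n)

lemma cylMass_le_one (n : ℕ) (x : Seq N) : cylMass μ n x ≤ 1 := measureReal_le_one

lemma information_nonneg (n : ℕ) (x : Seq N) : 0 ≤ information μ n x :=
  neg_nonneg.2 (Real.log_nonpos (cylMass_nonneg μ n x) (cylMass_le_one μ n x))

lemma integral_eq_wordSum (hF : DependsOn F (Iio n)) (z : Seq N) :
    ∫ x, F x ∂μ = wordSum n (fun x => cylMass μ n x * F x) z := by
  have hmeas : Measurable fun (x : Seq N) (i : Fin n) => x i := by fun_prop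
  have : IsProbabilityMeasure (μ.map fun (x : Seq N) (i : Fin n) => x i) :=
    Measure.isProbabilityMeasure_map hmeas.aemeasurable
  calc ∫ x, F x ∂μ
      = ∫ x, F (prepend (fun i : Fin n => x i) z) ∂μ := by
        congr with x
        exact (hF (prepend_mem_cylinder x z)).symm
    _ = ∫ w, F (prepend w z) ∂(μ.map fun (x : Seq N) (i : Fin n) => x i) :=
        (integral_map (f := fun w => F (prepend w z)) hmeas.aemeasurable
          (measurable_of_finite _).aestronglyMeasurable).symm
    _ = wordSum n (fun x => cylMass μ n x * F x) z := by
        rw [integral_fintype .of_finite]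
        simp only [map_measureReal_singleton μ _ z, smul_eq_mul, wordSum]

lemma wordSum_cylMass (n : ℕ) (z : Seq N) : wordSum n (cylMass μ n) z = 1 := by
  have h := integral_eq_wordSum μ (n := n) (F := fun _ => 1) (fun _ _ _ => rfl) z
  simpa using h.symm

lemma ae_cylMass_pos (n : ℕ) : ∀ᵐ x ∂μ, 0 < cylMass μ n x := by
  obtain ⟨z⟩ : Nonempty (Seq N) := nonempty_of_isProbabilityMeasure μ
  set Z : Set (Seq N) := {x | cylMass μ n x = 0}
  have hZ : MeasurableSet Z := measurable_cylMass μ n (measurableSet_singleton 0)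
  have hdep : DependsOn (Z.indicator (1 : Seq N → ℝ)) (Iio n) := fun x y hxy => by
    simp only [indicator, Z, mem_ofPred_eq, dependsOn_cylMass μ n hxy, Pi.one_apply]
  have hμZ : μ.real Z = 0 := by
    rw [← integral_indicator_one hZ, integral_eq_wordSum μ hdep z]
    exact Finset.sum_eq_zero fun w _ => by by_cases h : prepend w z ∈ Z <;> simp_all [Z]
  filter_upwards [measure_eq_zero_iff_ae_notMem.1 ((measureReal_eq_zero_iff).1 hμZ)] with x hx
  exact (cylMass_nonneg μ n x).lt_of_ne' hx

/-- Gibbs' inequality: no system of weights of total mass at most one predicts the cylinders of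
level `n` better than `μ` itself. -/
lemma integral_information_le (hF : DependsOn F (Iio n)) (hpos : ∀ x, 0 < F x)
    (hsum : ∀ z, wordSum n F z ≤ 1) :
    ∫ x, information μ n x ∂μ ≤ ∫ x, -Real.log (F x) ∂μ := by
  obtain ⟨z⟩ : Nonempty (Seq N) := nonempty_of_isProbabilityMeasure μ
  have hlog : DependsOn (fun x => -Real.log (F x)) (Iio n) := fun x y hxy => by
    simp only [hF hxy]
  have hdiv : DependsOn (fun x => F x / cylMass μ n x) (Iio n) := fun x y hxy => by
    simp only [hF hxy, dependsOn_cylMass μ n hxy]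
  have log_ratio_le : ∀ᵐ x ∂μ,
      information μ n x + 1 ≤ -Real.log (F x) + F x / cylMass μ n x := by
    filter_upwards [ae_cylMass_pos μ n] with x hx
    have := Real.log_le_sub_one_of_pos (div_pos (hpos x) hx)
    rw [Real.log_div (hpos x).ne' hx.ne'] at this
    simp only [information]
    linarith
  have integral_ratio_le : ∫ x, F x / cylMass μ n x ∂μ ≤ 1 := by
    rw [integral_eq_wordSum μ hdiv z]
    refine (wordSum_mono (fun x => ?_) z).trans (hsum z)
    rw [mul_div_left_comm]
    exact mul_le_of_le_one_right (hpos x).le (div_self_le_one _)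
  have hinfo := integrable_information μ n
  have hlogF := integrable_of_dependsOn (ν := μ) hlog
  have hratio := integrable_of_dependsOn (ν := μ) hdiv
  have h := integral_mono_ae (hinfo.add (integrable_const 1)) (hlogF.add hratio) log_ratio_le
  simp only [Pi.add_apply] at h
  rw [integral_add hinfo (integrable_const 1), integral_add hlogF hratio] at h
  simp only [integral_const, probReal_univ, smul_eq_mul] at h
  linarith

end Information

section Entropy

variable {N : ℕ} (μ : ProbabilityMeasure (Seq N))

lemma entropyAux_eq_integral_information (n : ℕ) :
    entropyAux μ n = ∫ x, information μ.toMeasure n x ∂μ.toMeasure := by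
  obtain ⟨z⟩ : Nonempty (Seq N) := nonempty_of_isProbabilityMeasure μ.toMeasure
  rw [integral_eq_wordSum μ.toMeasure (dependsOn_information _ n) z, entropyAux, wordSum,
    ← Finset.sum_neg_distrib]
  refine Finset.sum_congr rfl fun w _ => ?_
  have hw : cylinder (List.ofFn w) = PiNat.cylinder (prepend w z) n := by
    rw [← cylinder_ofFn]
    simp only [prepend_apply]
  rw [hw, information, mul_neg]
  rfl

lemma entropyAux_div_nonneg (n : ℕ) : 0 ≤ entropyAux μ n / n := by
  rw [entropyAux_eq_integral_information]
  exact div_nonneg (integral_nonneg (information_nonneg _ n)) n.cast_nonneg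

lemma entropyAux_div_le_log (n : ℕ) : entropyAux μ n / n ≤ Real.log N := by
  obtain ⟨z⟩ : Nonempty (Seq N) := nonempty_of_isProbabilityMeasure μ.toMeasure
  have hN : (0 : ℝ) < N := Nat.cast_pos.2 (z 0).pos
  refine div_le_of_le_mul₀ n.cast_nonneg (Real.log_natCast_nonneg N) ?_
  rw [entropyAux_eq_integral_information]
  refine (integral_information_le μ.toMeasure (F := fun _ => ((N : ℝ) ^ n)⁻¹) (fun _ _ _ => rfl)
    (fun _ => by positivity) fun z => ?_).trans_eq ?_
  · rw [wordSum_const, mul_inv_cancel₀ (by positivity)]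
  · simp [Real.log_inv, mul_comm]

lemma entropy_nonneg : 0 ≤ entropy μ :=
  le_liminf_of_le
    (isBoundedUnder_of ⟨Real.log N, entropyAux_div_le_log μ⟩).isCoboundedUnder_ge
    (.of_forall (entropyAux_div_nonneg μ))

lemma entropy_le_of_entropyAux_le {a b : ℝ} (h : ∀ n, entropyAux μ n ≤ n * a + b) :
    entropy μ ≤ a := by
  have hlim : Tendsto (fun n : ℕ => a + b / n) atTop (𝓝 a) := by
    simpa using (tendsto_const_div_atTop_nhds_zero_nat b).const_add a
  refine (liminf_le_liminf ?_ (isBoundedUnder_of ⟨0, entropyAux_div_nonneg μ⟩)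
    hlim.isBoundedUnder_le.isCoboundedUnder_ge).trans_eq hlim.liminf_eq
  filter_upwards [eventually_gt_atTop 0] with n hn
  rw [div_le_iff₀ (by exact_mod_cast hn)]
  rw [add_mul, div_mul_cancel₀ _ (by positivity), mul_comm]
  exact h n

end Entropy

section Parsing

variable {N : ℕ} {p : ℕ → Seq N → ℝ}

/-- The total weight of all parsings of the first `n` letters of `x` into nonempty words, the
weight of a parsing being the product of the weights `p k y` of its words, where `k` is the length
of the word and `y` is the tail of `x` starting with it. -/
noncomputable def parseSum (p : ℕ → Seq N → ℝ) : ℕ → Seq N → ℝ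
  | 0, _ => 1
  | n + 1, x => ∑ k : Fin (n + 1), p (k + 1) x * parseSum p (n - k) (shift^[k + 1] x)

lemma dependsOn_parseSum (hdep : ∀ n, DependsOn (p n) (Iio n)) (n : ℕ) :
    DependsOn (parseSum p n) (Iio n) := by
  induction n using Nat.strong_induction_on with
  | _ n ih =>
    cases n with
    | zero => exact fun x y _ => by simp only [parseSum]
    | succ n =>
      intro x y hxy
      simp only [parseSum]
      refine Finset.sum_congr rfl fun k _ => congrArg₂ (· * ·) ?_ ?_
      · exact (hdep _).mono (Iio_subset_Iio (by omega)) hxy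
      · exact (dependsOn_comp_shift (ih (n - k) (by omega)) (k + 1)).mono
          (Iio_subset_Iio (by omega)) hxy

section Nonneg

variable (hp : ∀ n x, 0 ≤ p n x)
include hp

lemma parseSum_nonneg (n : ℕ) (x : Seq N) : 0 ≤ parseSum p n x := by
  induction n using Nat.strong_induction_on generalizing x with
  | _ n ih =>
    cases n with
    | zero => simp [parseSum]
    | succ n =>
      simp only [parseSum]
      exact Finset.sum_nonneg fun k _ => mul_nonneg (hp _ _) (ih _ (by omega) _)

lemma mul_parseSum_le {m : ℕ} (hm : m ≠ 0) (n : ℕ) (x : Seq N) :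
    p m x * parseSum p n (shift^[m] x) ≤ parseSum p (m + n) x := by
  obtain ⟨k, rfl⟩ := Nat.exists_eq_succ_of_ne_zero hm
  rw [show k.succ + n = k + n + 1 by omega, parseSum]
  have h := Finset.single_le_sum (f := fun i : Fin (k + n + 1) =>
      p (i + 1) x * parseSum p (k + n - i) (shift^[i + 1] x))
    (fun i _ => mul_nonneg (hp _ _) (parseSum_nonneg hp _ _))
    (Finset.mem_univ (⟨k, by omega⟩ : Fin (k + n + 1)))
  simpa using h

lemma exp_neg_mul_le_parseSum {K : ℝ} (hK : ∀ x, Real.exp (-K) ≤ p 1 x) (n : ℕ) (x : Seq N) :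
    Real.exp (-(K * n)) ≤ parseSum p n x := by
  induction n generalizing x with
  | zero => simp [parseSum]
  | succ n ih =>
    calc Real.exp (-(K * (n + 1 : ℕ)))
        = Real.exp (-K) * Real.exp (-(K * n)) := by
          rw [← Real.exp_add]
          push_cast
          ring_nf
      _ ≤ p 1 x * parseSum p n (shift^[1] x) :=
          mul_le_mul (hK x) (ih _) (Real.exp_pos _).le (hp _ _)
      _ ≤ parseSum p (n + 1) x := by
          rw [add_comm n]
          exact mul_parseSum_le hp one_ne_zero n x

/-- The greedy parsing reads off words `n` with `exp (S_n g) ≤ p n` one after the other, and parses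
the remaining fewer than `M` letters into single letters. -/
lemma exp_birkhoffSum_sub_le_parseSum {K : ℝ} (hK₀ : 0 ≤ K) (hK : ∀ x, Real.exp (-K) ≤ p 1 x)
    {g : Seq N → ℝ} (hg : ∀ x, g x ≤ 0) {M : ℕ}
    (hM : ∀ x, ∃ n ≠ 0, n ≤ M ∧ Real.exp (birkhoffSum shift g n x) ≤ p n x)
    (n : ℕ) (x : Seq N) :
    Real.exp (birkhoffSum shift g n x - K * M) ≤ parseSum p n x := by
  induction n using Nat.strong_induction_on generalizing x with
  | _ n ih =>
    obtain ⟨m, hm, hmM, hmp⟩ := hM x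
    rcases lt_or_ge n m with hnm | hmn
    · refine le_trans (Real.exp_le_exp.2 ?_) (exp_neg_mul_le_parseSum hp hK n x)
      have hnM : K * n ≤ K * M := by gcongr; omega
      have := birkhoffSum_le (T := shift) hg n x
      linarith
    · obtain ⟨k, rfl⟩ := Nat.exists_eq_add_of_le hmn
      calc Real.exp (birkhoffSum shift g (m + k) x - K * M)
          = Real.exp (birkhoffSum shift g m x)
              * Real.exp (birkhoffSum shift g k (shift^[m] x) - K * M) := by
            rw [← Real.exp_add, birkhoffSum_add, add_sub_assoc]
        _ ≤ p m x * parseSum p k (shift^[m] x) :=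
            mul_le_mul hmp (ih k (by omega) _) (Real.exp_pos _).le (hp _ _)
        _ ≤ parseSum p (m + k) x := mul_parseSum_le hp hm k x

lemma wordSum_parseSum_le_one {A : ℕ → ℝ} (hA : ∀ n z, wordSum n (p n) z ≤ A n)
    (hsum : ∀ n, ∑ k ∈ Finset.range n, A (k + 1) ≤ 1) (n : ℕ) (z : Seq N) :
    wordSum n (parseSum p n) z ≤ 1 := by
  induction n using Nat.strong_induction_on generalizing z with
  | _ n ih =>
    cases n with
    | zero => simp [wordSum, parseSum]
    | succ n =>
      have first_word_le (k : Fin (n + 1)) : wordSum (n + 1)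
          (fun x => p (k + 1) x * parseSum p (n - k) (shift^[k + 1] x)) z ≤ A (k + 1) := by
        have hA₀ : 0 ≤ A (k + 1) := (Finset.sum_nonneg fun _ _ => hp _ _).trans (hA (k + 1) z)
        rw [show wordSum (n + 1) = wordSum ((k + 1) + (n - k)) by congr 1; omega,
          wordSum_mul_comp_shift]
        calc wordSum (n - k) (fun y => wordSum (k + 1) (p (k + 1)) y * parseSum p (n - k) y) z
            ≤ wordSum (n - k) (fun y => A (k + 1) * parseSum p (n - k) y) z :=
              wordSum_mono (fun y => mul_le_mul_of_nonneg_right (hA _ y)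
                (parseSum_nonneg hp _ _)) z
          _ = A (k + 1) * wordSum (n - k) (parseSum p (n - k)) z := wordSum_const_mul _ _ _ _
          _ ≤ A (k + 1) := mul_le_of_le_one_right hA₀ (ih _ (by omega) z)
      calc wordSum (n + 1) (parseSum p (n + 1)) z
          = ∑ k : Fin (n + 1), wordSum (n + 1)
              (fun x => p (k + 1) x * parseSum p (n - k) (shift^[k + 1] x)) z := by
            simp only [wordSum, parseSum]
            exact Finset.sum_comm
        _ ≤ ∑ k : Fin (n + 1), A (k + 1) := Finset.sum_le_sum fun k _ => first_word_le k
        _ = ∑ k ∈ Finset.range (n + 1), A (k + 1) :=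
            Fin.sum_univ_eq_sum_range (fun k => A (k + 1)) (n + 1)
        _ ≤ 1 := hsum (n + 1)

end Nonneg

end Parsing

section EntropyUpperBound

variable {N : ℕ} (μ : Measure (Seq N)) {a : ℕ → ℝ}

/-- The weight of the word formed by the first `n` letters of `x` in a parsing: a multiple of its
mass, to which single letters add a positive constant so that every word can be parsed. -/
noncomputable def parseWeight (a : ℕ → ℝ) (n : ℕ) (x : Seq N) : ℝ :=
  a n * cylMass μ n x + if n = 1 then (2 * N : ℝ)⁻¹ else 0

lemma dependsOn_parseWeight (a : ℕ → ℝ) (n : ℕ) : DependsOn (parseWeight μ a n) (Iio n) :=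
  fun x y hxy => by simp only [parseWeight, dependsOn_cylMass μ n hxy]

lemma mul_cylMass_le_parseWeight (a : ℕ → ℝ) (n : ℕ) (x : Seq N) :
    a n * cylMass μ n x ≤ parseWeight μ a n x :=
  le_add_of_nonneg_right (by split_ifs <;> positivity)

lemma parseWeight_nonneg (ha : ∀ n, 0 ≤ a n) (n : ℕ) (x : Seq N) : 0 ≤ parseWeight μ a n x :=
  (mul_nonneg (ha n) (cylMass_nonneg μ n x)).trans (mul_cylMass_le_parseWeight μ a n x)

lemma exp_neg_log_le_parseWeight_one (ha : ∀ n, 0 ≤ a n) (x : Seq N) :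
    Real.exp (-Real.log (2 * N)) ≤ parseWeight μ a 1 x := by
  have hN : (0 : ℝ) < N := Nat.cast_pos.2 (x 0).pos
  rw [Real.exp_neg, Real.exp_log (by positivity), parseWeight, if_pos rfl]
  exact le_add_of_nonneg_left (mul_nonneg (ha 1) (cylMass_nonneg μ 1 x))

lemma wordSum_parseWeight [IsProbabilityMeasure μ] (a : ℕ → ℝ) (n : ℕ) (z : Seq N) :
    wordSum n (parseWeight μ a n) z = a n + if n = 1 then 1 / 2 else 0 := by
  have hN : (N : ℝ) ≠ 0 := Nat.cast_ne_zero.2 (z 0).pos.ne'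
  have hmass := wordSum_cylMass μ n z
  simp only [wordSum] at hmass
  simp only [wordSum, parseWeight, Finset.sum_add_distrib, ← Finset.mul_sum, hmass, mul_one]
  split_ifs with h
  · subst h
    simp [mul_comm, hN]
  · simp

lemma wordSum_parseSum_parseWeight_le_one [IsProbabilityMeasure μ] (ha : ∀ n, 0 ≤ a n)
    (hsum : HasSum a (1 / 2)) (n : ℕ) (z : Seq N) :
    wordSum n (parseSum (parseWeight μ a) n) z ≤ 1 := by
  refine wordSum_parseSum_le_one (parseWeight_nonneg μ ha)
    (fun n z => (wordSum_parseWeight μ a n z).le) (fun n => ?_) n z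
  have sum_letters_le : ∑ k ∈ Finset.range n, (if k + 1 = 1 then (1 / 2 : ℝ) else 0) ≤ 1 / 2 := by
    simp only [Nat.add_eq_right, Finset.sum_ite_eq']
    split_ifs <;> norm_num
  have sum_le := sum_le_hasSum (Finset.range (n + 1)) (fun k _ => ha k) hsum
  rw [Finset.sum_range_succ'] at sum_le
  rw [Finset.sum_add_distrib]
  linarith [ha 0]

variable (ν : ProbabilityMeasure (Seq N))

lemma entropy_le_of_forall_exists_le_parseWeight
    (hν : MeasurePreserving shift ν.toMeasure ν.toMeasure)
    (ha : ∀ n, 0 ≤ a n) (hsum : HasSum a (1 / 2)) {g : Seq N → ℝ} (hg : ∀ x, g x ≤ 0)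
    (hgint : Integrable g ν.toMeasure) {M : ℕ}
    (hM : ∀ x, ∃ n ≠ 0, n ≤ M ∧
      Real.exp (birkhoffSum shift g n x) ≤ parseWeight ν.toMeasure a n x) :
    entropy ν ≤ -∫ x, g x ∂ν.toMeasure := by
  set K := Real.log (2 * N)
  set Q := parseSum (parseWeight ν.toMeasure a)
  have hK₀ : 0 ≤ K := by simpa [K] using Real.log_natCast_nonneg (2 * N)
  have exp_le (n : ℕ) (x : Seq N) : Real.exp (birkhoffSum shift g n x - K * M) ≤ Q n x :=
    exp_birkhoffSum_sub_le_parseSum (parseWeight_nonneg _ ha) hK₀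
      (exp_neg_log_le_parseWeight_one _ ha) hg hM n x
  have hQ (n : ℕ) : DependsOn (Q n) (Iio n) := dependsOn_parseSum (dependsOn_parseWeight _ a) n
  have hlogQ (n : ℕ) : DependsOn (fun x => -Real.log (Q n x)) (Iio n) := fun x y hxy => by
    simp only [hQ n hxy]
  refine entropy_le_of_entropyAux_le ν (b := K * M) fun n => ?_
  have hbirk := integrable_birkhoffSum hν hgint n
  calc entropyAux ν n
      = ∫ x, information ν.toMeasure n x ∂ν.toMeasure := entropyAux_eq_integral_information ν n
    _ ≤ ∫ x, -Real.log (Q n x) ∂ν.toMeasure :=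
        integral_information_le _ (hQ n) (fun x => (Real.exp_pos _).trans_le (exp_le n x))
          (wordSum_parseSum_parseWeight_le_one _ ha hsum n)
    _ ≤ ∫ x, (K * M - birkhoffSum shift g n x) ∂ν.toMeasure := by
        refine integral_mono (integrable_of_dependsOn (hlogQ n))
          ((integrable_const _).sub hbirk) fun x => ?_
        have := Real.log_le_log (Real.exp_pos _) (exp_le n x)
        rw [Real.log_exp] at this
        linarith
    _ = n * -∫ x, g x ∂ν.toMeasure + K * M := by
        rw [integral_sub (integrable_const _) hbirk, integral_birkhoffSum hν hgint]
        simp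
        ring

lemma entropy_le_neg_integral_add_log_mul
    (hν : MeasurePreserving shift ν.toMeasure ν.toMeasure)
    (ha : ∀ n, 0 ≤ a n) (hsum : HasSum a (1 / 2)) {f : Seq N → ℝ} (hf : ∀ x, f x ≤ 0)
    (hfint : Integrable f ν.toMeasure) {B : Set (Seq N)} (hB : MeasurableSet B) {M : ℕ}
    (hM : ∀ x ∉ B, ∃ n ≠ 0, n ≤ M ∧
      Real.exp (birkhoffSum shift f n x) ≤ a n * cylMass ν.toMeasure n x) :
    entropy ν ≤ -∫ x, f x ∂ν.toMeasure + Real.log (2 * N) * ν.toMeasure.real B := by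
  set K := Real.log (2 * N)
  have hK₀ : 0 ≤ K := by simpa [K] using Real.log_natCast_nonneg (2 * N)
  -- On `B` the price `K` pays for a single letter.
  set g : Seq N → ℝ := f - B.indicator fun _ => K
  have hgf (x : Seq N) : g x ≤ f x := sub_le_self _ (indicator_nonneg (fun _ _ => hK₀) x)
  have hindicator : Integrable (B.indicator fun _ => K) ν.toMeasure :=
    (integrable_const K).indicator hB
  refine (entropy_le_of_forall_exists_le_parseWeight ν hν ha hsum (g := g) (M := M + 1)
    (fun x => (hgf x).trans (hf x)) (hfint.sub hindicator) fun x => ?_).trans_eq ?_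
  · by_cases hx : x ∈ B
    · refine ⟨1, one_ne_zero, by omega, ?_⟩
      have hgx : g x ≤ -K := by simp [g, hx, hf x]
      rw [birkhoffSum_one]
      exact (Real.exp_le_exp.2 hgx).trans (exp_neg_log_le_parseWeight_one _ ha x)
    · obtain ⟨n, hn, hnM, hle⟩ := hM x hx
      refine ⟨n, hn, by omega, ?_⟩
      calc Real.exp (birkhoffSum shift g n x)
          ≤ Real.exp (birkhoffSum shift f n x) :=
            Real.exp_le_exp.2 (Finset.sum_le_sum fun k _ => hgf _)
        _ ≤ a n * cylMass ν.toMeasure n x := hle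
        _ ≤ parseWeight ν.toMeasure a n x := mul_cylMass_le_parseWeight _ a n x
  · simp only [g, Pi.sub_apply]
    rw [integral_sub hfint hindicator, integral_indicator_const K hB, smul_eq_mul]
    ring

lemma entropy_le_neg_integral (hν : MeasurePreserving shift ν.toMeasure ν.toMeasure)
    (ha : ∀ n, 0 ≤ a n) (hsum : HasSum a (1 / 2)) {f : Seq N → ℝ} (hfmeas : Measurable f)
    (hf : ∀ x, f x ≤ 0) (hfint : Integrable f ν.toMeasure)
    (hheavy : ∀ᵐ x ∂ν.toMeasure, ∃ n ≠ 0,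
      Real.exp (birkhoffSum shift f n x) ≤ a n * cylMass ν.toMeasure n x) :
    entropy ν ≤ -∫ x, f x ∂ν.toMeasure := by
  set B : ℕ → Set (Seq N) := fun M => ⋂ n ∈ Finset.Icc 1 M,
    {x | a n * cylMass ν.toMeasure n x < Real.exp (birkhoffSum shift f n x)}
  have mem_B {M : ℕ} {x : Seq N} : x ∈ B M ↔ ∀ n ≠ 0, n ≤ M →
      a n * cylMass ν.toMeasure n x < Real.exp (birkhoffSum shift f n x) := by
    simp [B, Nat.one_le_iff_ne_zero]
  have hBmeas (M : ℕ) : MeasurableSet (B M) := Finset.measurableSet_biInter _ fun n _ =>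
    measurableSet_lt ((measurable_cylMass _ n).const_mul _)
      (measurable_birkhoffSum hν.measurable hfmeas n).exp
  have hBanti : Antitone B := fun M M' h x hx =>
    mem_B.2 fun n hn hnM => mem_B.1 hx n hn (hnM.trans h)
  have hBnull : ν.toMeasure (⋂ M, B M) = 0 := by
    refine measure_eq_zero_iff_ae_notMem.2 (hheavy.mono fun x ⟨n, hn, hle⟩ hx => ?_)
    exact (mem_B.1 (mem_iInter.1 hx n) n hn le_rfl).not_ge hle
  have hBlim : Tendsto (fun M => ν.toMeasure.real (B M)) atTop (𝓝 0) := by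
    have h := tendsto_measure_iInter_atTop (μ := ν.toMeasure)
      (fun M => (hBmeas M).nullMeasurableSet) hBanti ⟨0, measure_ne_top _ _⟩
    rw [hBnull] at h
    exact (ENNReal.tendsto_toReal ENNReal.zero_ne_top).comp h
  have entropy_le (M : ℕ) :
      entropy ν ≤ -∫ x, f x ∂ν.toMeasure + Real.log (2 * N) * ν.toMeasure.real (B M) :=
    entropy_le_neg_integral_add_log_mul ν hν ha hsum hf hfint (hBmeas M) (M := M) fun x hx => by
      simpa [mem_B] using hx
  have hlim := (hBlim.const_mul (Real.log (2 * N))).const_add (-∫ x, f x ∂ν.toMeasure)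
  rw [mul_zero, add_zero] at hlim
  exact ge_of_tendsto' hlim entropy_le

end EntropyUpperBound

section HeavySet

variable {N : ℕ} {μ : Measure (Seq N)} {f g : Seq N → ℝ}

/-- The strings `x` such that, for infinitely many `n`, the cylinder of level `n` around `x` has
mass at least a fixed multiple of `exp (∑_{k<n} f (S^k x))`. -/
def heavySet (μ : Measure (Seq N)) (f : Seq N → ℝ) : Set (Seq N) :=
  {x | ∃ C : ℕ, ∃ᶠ n in atTop, Real.exp (birkhoffSum shift f n x - C) ≤ cylMass μ n x}

lemma eventually_cylMass_lt_of_notMem_heavySet {x : Seq N} (hx : x ∉ heavySet μ f) (C : ℕ) :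
    ∀ᶠ n in atTop, cylMass μ n x < Real.exp (birkhoffSum shift f n x - C) := by
  simpa [not_frequently] using not_exists.1 hx C

lemma measurable_shift : Measurable (shift : Seq N → Seq N) :=
  measurable_pi_lambda _ fun n => measurable_pi_apply (n + 1)

lemma measurableSet_heavySet (hf : Measurable f) : MeasurableSet (heavySet μ f) := by
  have heavySet_eq : heavySet μ f = ⋃ C : ℕ, ⋂ m : ℕ, ⋃ n ≥ m,
      {x | Real.exp (birkhoffSum shift f n x - C) ≤ cylMass μ n x} := by
    ext x
    simp [heavySet, frequently_atTop]
  rw [heavySet_eq]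
  refine .iUnion fun C => .iInter fun m => .iUnion fun n => .iUnion fun _ => ?_
  exact measurableSet_le ((measurable_birkhoffSum measurable_shift hf n).sub_const _).exp
    (measurable_cylMass μ n)

lemma cylMass_succ_le [IsFiniteMeasure μ] (hμ : MeasurePreserving shift μ μ) (n : ℕ)
    (x : Seq N) : cylMass μ (n + 1) x ≤ cylMass μ n (shift x) := by
  rw [cylMass, cylMass,
    ← hμ.measureReal_preimage (PiNat.isOpen_cylinder _ _ n).measurableSet.nullMeasurableSet]
  exact measureReal_mono fun y hy k hk => hy (k + 1) (by omega)

lemma heavySet_subset_preimage [IsFiniteMeasure μ] (hμ : MeasurePreserving shift μ μ) :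
    heavySet μ f ⊆ shift ⁻¹' heavySet μ f := by
  rintro x ⟨C, hC⟩
  refine ⟨C + ⌈-f x⌉₊, frequently_atTop.2 fun m => ?_⟩
  obtain ⟨_ | n, hn, hle⟩ := frequently_atTop.1 hC (m + 1)
  · omega
  refine ⟨n, by omega, le_trans ?_ (hle.trans (cylMass_succ_le hμ n x))⟩
  rw [birkhoffSum_succ', Real.exp_le_exp]
  push_cast
  linarith [Nat.le_ceil (-f x)]

lemma measure_heavySet_eq_zero_or_one [IsProbabilityMeasure μ] (herg : Ergodic shift μ)
    (hf : Measurable f) : μ (heavySet μ f) = 0 ∨ μ (heavySet μ f) = 1 := by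
  have hmeas := measurableSet_heavySet (μ := μ) hf
  have h := herg.ae_empty_or_univ_of_ae_le_preimage hmeas.nullMeasurableSet
    (heavySet_subset_preimage herg.toMeasurePreserving).eventuallyLE
  rwa [ae_eq_empty, ae_eq_univ, prob_compl_eq_zero_iff hmeas] at h

lemma exists_weights_of_mem_heavySet {ε : ℝ} (hε : 0 < ε) (hgf : ∀ x, g x ≤ f x - ε) :
    ∃ a : ℕ → ℝ, (∀ n, 0 ≤ a n) ∧ HasSum a (1 / 2) ∧ ∀ x ∈ heavySet μ f,
      ∃ᶠ n in atTop, Real.exp (birkhoffSum shift g n x) ≤ a n * cylMass μ n x := by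
  set r := Real.exp (-(ε / 2))
  have hr : 0 < 1 - r := sub_pos.2 (Real.exp_lt_one_iff.2 (by linarith))
  refine ⟨fun n => (1 - r) / 2 * r ^ n, fun n => by positivity, ?_, fun x ⟨C, hC⟩ => ?_⟩
  · have hgeom := (hasSum_geometric_of_lt_one (Real.exp_pos _).le (sub_pos.1 hr)).mul_left
      ((1 - r) / 2)
    rwa [div_mul_eq_mul_div, mul_inv_cancel₀ hr.ne'] at hgeom
  have hlarge : ∀ᶠ n : ℕ in atTop, C - Real.log ((1 - r) / 2) ≤ n * (ε / 2) :=
    (tendsto_natCast_atTop_atTop.atTop_mul_const (half_pos hε)).eventually_ge_atTop _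
  have birkhoffSum_le_sub (n : ℕ) :
      birkhoffSum shift g n x ≤ birkhoffSum shift f n x - n * ε := by
    simpa [birkhoffSum, Finset.sum_sub_distrib] using
      Finset.sum_le_sum fun k (_ : k ∈ Finset.range n) => hgf (shift^[k] x)
  refine (hC.and_eventually hlarge).mono fun n ⟨hle, hn⟩ => ?_
  calc Real.exp (birkhoffSum shift g n x)
      ≤ Real.exp (Real.log ((1 - r) / 2) + n * (-(ε / 2)) + (birkhoffSum shift f n x - C)) :=
        Real.exp_le_exp.2 (by linarith [birkhoffSum_le_sub n, hn])
    _ = (1 - r) / 2 * r ^ n * Real.exp (birkhoffSum shift f n x - C) := by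
        rw [Real.exp_add, Real.exp_add, Real.exp_log (half_pos hr), Real.exp_nat_mul]
    _ ≤ (1 - r) / 2 * r ^ n * cylMass μ n x := by gcongr

end HeavySet

section Dichotomy

variable {N : ℕ} {μ : ProbabilityMeasure (Seq N)} {f : Seq N → ℝ}

lemma measure_heavySet_eq_zero (herg : Ergodic shift μ.toMeasure) (hf : Measurable f)
    (hf₀ : ∀ x, f x ≤ 0) (hfint : Integrable f μ.toMeasure)
    (hlt : -∫ x, f x ∂μ.toMeasure < entropy μ) :
    μ.toMeasure (heavySet μ.toMeasure f) = 0 := by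
  refine (measure_heavySet_eq_zero_or_one herg hf).resolve_right fun hfull => ?_
  obtain ⟨ε, hε, hlt⟩ : ∃ ε > 0, -∫ x, f x ∂μ.toMeasure + ε < entropy μ :=
    ⟨(entropy μ + ∫ x, f x ∂μ.toMeasure) / 2, by linarith, by linarith⟩
  obtain ⟨a, ha, hsum, hheavy⟩ :=
    exists_weights_of_mem_heavySet (μ := μ.toMeasure) hε (fun x => le_refl (f x - ε))
  have entropy_le := entropy_le_neg_integral μ herg.toMeasurePreserving ha hsum
    (hf.sub_const ε) (fun x => by linarith [hf₀ x]) (hfint.sub (integrable_const ε)) <| by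
      filter_upwards [(mem_ae_iff_prob_eq_one (measurableSet_heavySet hf)).2 hfull] with x hx
      obtain ⟨n, hle, hn⟩ := ((hheavy x hx).and_eventually (eventually_ne_atTop 0)).exists
      exact ⟨n, hn, hle⟩
  rw [integral_sub hfint (integrable_const ε)] at entropy_le
  simp only [integral_const, probReal_univ, smul_eq_mul, one_mul] at entropy_le
  linarith

lemma frequently_entropyAux_div_lt {q : ℝ} (hq : entropy μ < q) :
    ∃ᶠ n : ℕ in atTop, entropyAux μ n / n < q :=
  frequently_lt_of_liminf_lt
    (isBoundedUnder_of ⟨Real.log N, entropyAux_div_le_log μ⟩).isCoboundedUnder_ge hq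

lemma integral_information_add_birkhoffSum_div
    (hμ : MeasurePreserving shift μ.toMeasure μ.toMeasure) (hfint : Integrable f μ.toMeasure)
    {n : ℕ} (hn : n ≠ 0) :
    ∫ x, (information μ.toMeasure n x + birkhoffSum shift f n x) / n ∂μ.toMeasure
      = entropyAux μ n / n + ∫ x, f x ∂μ.toMeasure := by
  rw [integral_div, integral_add (integrable_information _ n) (integrable_birkhoffSum hμ hfint n),
    integral_birkhoffSum hμ hfint, entropyAux_eq_integral_information]
  field_simp

lemma measure_heavySet_eq_one (herg : Ergodic shift μ.toMeasure) (hf : Measurable f)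
    {b : ℝ} (hb : ∀ x, b ≤ f x) (hfint : Integrable f μ.toMeasure)
    (hlt : entropy μ < -∫ x, f x ∂μ.toMeasure) :
    μ.toMeasure (heavySet μ.toMeasure f) = 1 := by
  refine (measure_heavySet_eq_zero_or_one herg hf).resolve_left fun hnull => ?_
  obtain ⟨q, hq, hqf⟩ := exists_between hlt
  have hμ := herg.toMeasurePreserving
  have hpos : ∀ᵐ x ∂μ.toMeasure, ∀ n, 0 < cylMass μ.toMeasure n x :=
    ae_all_iff.2 (ae_cylMass_pos μ.toMeasure)
  refine absurd (nonneg_of_frequently_integral_le (μ := μ.toMeasure) (h := fun _ => min b 0)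
    (g := fun n x => (information μ.toMeasure n x + birkhoffSum shift f n x) / n)
    (q := q + ∫ x, f x ∂μ.toMeasure) (fun n => ?_) (integrable_const _) (fun n x => ?_) ?_ ?_)
    (by linarith)
  · exact ((integrable_information _ n).add (integrable_birkhoffSum hμ hfint n)).div_const _
  · have h₁ := information_nonneg μ.toMeasure n x
    have h₂ := le_birkhoffSum (T := shift) hb n x
    rcases n.eq_zero_or_pos with rfl | hn
    · simp
    · rw [le_div_iff₀ (by positivity)]
      nlinarith [min_le_left b 0, min_le_right b 0]
  · filter_upwards [measure_eq_zero_iff_ae_notMem.1 hnull, hpos] with x hx hposx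
    filter_upwards [eventually_cylMass_lt_of_notMem_heavySet hx 0] with n hn
    have hlog := Real.log_lt_log (hposx n) hn
    rw [Real.log_exp, Nat.cast_zero, sub_zero] at hlog
    rw [information]
    exact div_nonneg (by linarith) n.cast_nonneg
  · refine ((frequently_entropyAux_div_lt hq).and_eventually (eventually_ne_atTop 0)).mono
      fun n hn => ?_
    rw [integral_information_add_birkhoffSum_div hμ hfint hn.2]
    linarith [hn.1]

end Dichotomy

section TreeMetric

variable {N : ℕ} {Λ : Seq N → ℝ} {b b' c t : ℝ}

lemma BddDistortion.one_le (hdist : BddDistortion Λ c) (x : Seq N) : 1 ≤ c := by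
  simpa [birkhoff] using hdist 0 x x fun _ _ => rfl

lemma BddDistortion.exists_lower_bound (hdist : BddDistortion Λ c) : ∃ b, ∀ x, b ≤ Λ x := by
  obtain ⟨b, hb⟩ := (finite_range fun i : Fin N => Λ fun _ => i).bddBelow
  refine ⟨b - Real.log c, fun x => ?_⟩
  have hc : 0 < c := zero_lt_one.trans_le (hdist.one_le x)
  have hle := hdist 1 (fun _ => x 0) x fun k hk => by rw [Nat.lt_one_iff.1 hk]
  simp only [birkhoff, Finset.sum_range_one, Function.iterate_zero, id_eq] at hle
  rw [← Real.exp_log hc, ← Real.exp_add, Real.exp_le_exp] at hle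
  linarith [hb ⟨x 0, rfl⟩]

lemma treeDist_eq_sSup {x y : Seq N} (hxy : x ≠ y) :
    treeDist Λ x y = sSup ((fun z => Real.exp (birkhoffSum shift Λ (PiNat.firstDiff x y) z)) ''
      PiNat.cylinder x (PiNat.firstDiff x y)) := by
  have common_prefix : {n : ℕ | ∀ m < n, x m = y m} = Iic (PiNat.firstDiff x y) := by
    ext n
    exact ⟨fun h => not_lt.1 fun hlt => PiNat.apply_firstDiff_ne hxy (h _ hlt),
      fun h m hm => PiNat.apply_eq_of_lt_firstDiff (hm.trans_le h)⟩
  rw [treeDist, if_neg hxy, sWord, cylinder_ofFn, List.length_ofFn, common_prefix, csSup_Iic]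
  rfl

lemma exp_birkhoffSum_le_treeDist (hΛ : ∀ x, Λ x ≤ 0) {x y : Seq N} (hxy : x ≠ y) :
    Real.exp (birkhoffSum shift Λ (PiNat.firstDiff x y) x) ≤ treeDist Λ x y := by
  rw [treeDist_eq_sSup hxy]
  refine le_csSup ⟨1, ?_⟩ ⟨x, PiNat.self_mem_cylinder x _, rfl⟩
  rintro _ ⟨z, -, rfl⟩
  simpa using birkhoffSum_le (T := shift) hΛ (PiNat.firstDiff x y) z

lemma birkhoffSum_antitone (hΛ : ∀ x, Λ x ≤ 0) (x : Seq N) :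
    Antitone fun n => birkhoffSum shift Λ n x :=
  antitone_nat_of_succ_le fun n => by
    rw [birkhoffSum_succ]
    exact add_le_of_nonpos_right (hΛ _)

lemma treeDiam_cylinder_le (hΛ : ∀ x, Λ x ≤ 0) (hdist : BddDistortion Λ c) (x : Seq N) (n : ℕ) :
    treeDiam Λ (PiNat.cylinder x n)
      ≤ ENNReal.ofReal (c * Real.exp (birkhoffSum shift Λ n x)) := by
  refine iSup₂_le fun y hy => iSup₂_le fun z hz => ?_
  rcases eq_or_ne y z with rfl | hyz
  · simp [treeDist]
  have hn : n ≤ PiNat.firstDiff y z := by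
    rw [← PiNat.mem_cylinder_iff_le_firstDiff hyz, PiNat.mem_cylinder_iff]
    exact fun k hk => (hy k hk).trans (hz k hk).symm
  rw [treeDist_eq_sSup hyz]
  refine ENNReal.ofReal_le_ofReal (csSup_le ⟨_, y, PiNat.self_mem_cylinder y _, rfl⟩ ?_)
  rintro _ ⟨u, hu, rfl⟩
  calc Real.exp (birkhoffSum shift Λ (PiNat.firstDiff y z) u)
      ≤ Real.exp (birkhoffSum shift Λ n u) := Real.exp_le_exp.2 (birkhoffSum_antitone hΛ u hn)
    _ ≤ c * Real.exp (birkhoffSum shift Λ n x) :=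
        hdist n u x fun k hk => (hu k (hk.trans_le hn)).trans (hy k hk)

lemma treeDiam_cylinder_rpow_le (hΛ : ∀ x, Λ x ≤ 0) (hdist : BddDistortion Λ c) (ht : 0 ≤ t)
    (x : Seq N) (n : ℕ) :
    treeDiam Λ (PiNat.cylinder x n) ^ t
      ≤ ENNReal.ofReal (c ^ t * Real.exp (birkhoffSum shift (t • Λ) n x)) := by
  have hc : 0 ≤ c := zero_le_one.trans (hdist.one_le x)
  refine (ENNReal.rpow_le_rpow (treeDiam_cylinder_le hΛ hdist x n) ht).trans_eq ?_
  rw [ENNReal.ofReal_rpow_of_nonneg (by positivity) ht, Real.mul_rpow hc (Real.exp_pos _).le,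
    ← Real.exp_mul, mul_comm _ t, birkhoffSum_smul]

lemma treeDist_le_treeDiam {A : Set (Seq N)} {x y : Seq N} (hx : x ∈ A) (hy : y ∈ A) :
    ENNReal.ofReal (treeDist Λ x y) ≤ treeDiam Λ A :=
  (le_iSup₂ (f := fun j (_ : j ∈ A) => ENNReal.ofReal (treeDist Λ x j)) y hy).trans
    (le_iSup₂ (f := fun i (_ : i ∈ A) => ⨆ j ∈ A, ENNReal.ofReal (treeDist Λ i j)) x hx)

lemma treeDiam_empty : treeDiam Λ ∅ = 0 := by simp [treeDiam]

lemma treeHMeasure_le_of_forall_exists_cover {ι : Type*} [Countable ι] (ht : 0 < t)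
    {E : Set (Seq N)} {r : ℝ≥0∞}
    (hcover : ∀ δ > 0, ∃ g : ι → Set (Seq N), E ⊆ ⋃ i, g i ∧ (∀ i, treeDiam Λ (g i) ≤ δ) ∧
      ∑' i, treeDiam Λ (g i) ^ t ≤ r) :
    treeHMeasure Λ t E ≤ r := by
  have := Encodable.ofCountable ι
  refine iSup₂_le fun δ hδ => ?_
  obtain ⟨g, hE, hdiam, hsum⟩ := hcover δ hδ
  refine (iInf₂_le (fun k => ⋃ i ∈ Encodable.decode₂ ι k, g i) ?_).trans
    ((iInf_le _ fun k => ?_).trans ?_)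
  · rwa [Encodable.iUnion_decode₂]
  · exact Encodable.iUnion_decode₂_cases (C := fun A => treeDiam Λ A ≤ δ)
      (by simp [treeDiam_empty]) hdiam
  · rwa [tsum_iUnion_decode₂ (fun A => treeDiam Λ A ^ t)
      (by rw [treeDiam_empty, ENNReal.zero_rpow_of_pos ht])]

lemma exists_treeDiam_cylinder_le (hb : b < 0) (hΛ : ∀ x, Λ x ≤ b) (hdist : BddDistortion Λ c)
    {δ : ℝ≥0∞} (hδ : 0 < δ) : ∃ m, ∀ n ≥ m, ∀ x, treeDiam Λ (PiNat.cylinder x n) ≤ δ := by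
  have hlim : Tendsto (fun n : ℕ => ENNReal.ofReal (c * Real.exp (n * b))) atTop (𝓝 0) := by
    have h := ENNReal.tendsto_ofReal ((Real.tendsto_exp_atBot.comp
      (tendsto_natCast_atTop_atTop.atTop_mul_const_of_neg hb)).const_mul c)
    rwa [mul_zero, ENNReal.ofReal_zero] at h
  refine eventually_atTop.1 ((hlim.eventually_le_const hδ).mono fun n hn x => ?_)
  have hc : 0 ≤ c := zero_le_one.trans (hdist.one_le x)
  refine (treeDiam_cylinder_le (fun x => (hΛ x).trans hb.le) hdist x n).trans
    (le_trans (ENNReal.ofReal_le_ofReal ?_) hn)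
  gcongr
  exact birkhoffSum_le hΛ n x

lemma tsum_ofReal_mul_cylMass (μ : Measure (Seq N)) [IsProbabilityMeasure μ] {a : ℕ → ℝ}
    (ha : ∀ n, 0 ≤ a n) (z : Seq N) :
    ∑' p : Σ n : ℕ, Fin n → Fin N, ENNReal.ofReal (a p.1 * cylMass μ p.1 (prepend p.2 z))
      = ∑' n, ENNReal.ofReal (a n) := by
  rw [ENNReal.tsum_sigma']
  refine tsum_congr fun n => ?_
  rw [tsum_fintype, ← ENNReal.ofReal_sum_of_nonneg
    fun w _ => mul_nonneg (ha n) (cylMass_nonneg μ _ _), ← Finset.mul_sum]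
  exact congrArg _ ((congrArg (a n * ·) (wordSum_cylMass μ n z)).trans (mul_one _))

lemma treeHMeasure_le_tsum (μ : Measure (Seq N)) [IsProbabilityMeasure μ] (hb : b < 0)
    (hΛ : ∀ x, Λ x ≤ b) (hdist : BddDistortion Λ c) (ht : 0 < t) {a : ℕ → ℝ}
    (ha : ∀ n, 0 ≤ a n) {E : Set (Seq N)} (hE : ∀ x ∈ E, ∃ᶠ n in atTop,
      Real.exp (birkhoffSum shift (t • Λ) n x) ≤ a n * cylMass μ n x) :
    treeHMeasure Λ t E ≤ ∑' n, ENNReal.ofReal (c ^ t * a n) := by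
  obtain ⟨z⟩ : Nonempty (Seq N) := nonempty_of_isProbabilityMeasure μ
  have hc : 0 ≤ c := zero_le_one.trans (hdist.one_le z)
  rw [← tsum_ofReal_mul_cylMass μ (fun n => by have := ha n; positivity) z]
  set cyl : (Σ n : ℕ, Fin n → Fin N) → Set (Seq N) :=
    fun p => PiNat.cylinder (prepend p.2 z) p.1
  set bound : (Σ n : ℕ, Fin n → Fin N) → ℝ≥0∞ :=
    fun p => ENNReal.ofReal (c ^ t * a p.1 * cylMass μ p.1 (prepend p.2 z))
  have exists_cyl {x : Seq N} (hx : x ∈ E) (m : ℕ) :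
      ∃ p, m ≤ p.1 ∧ treeDiam Λ (cyl p) ^ t ≤ bound p ∧ x ∈ cyl p := by
    obtain ⟨n, hmn, hle⟩ := frequently_atTop.1 (hE x hx) m
    have hprepend := prepend_mem_cylinder (n := n) x z
    have hcyl : PiNat.cylinder (prepend (fun i : Fin n => x i) z) n = PiNat.cylinder x n :=
      PiNat.mem_cylinder_iff_eq.1 hprepend
    refine ⟨⟨n, fun i => x i⟩, hmn, ?_, hcyl.ge (PiNat.self_mem_cylinder x n)⟩
    simp only [cyl, bound, dependsOn_cylMass μ n fun k hk => hprepend k hk]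
    rw [hcyl, mul_assoc]
    refine (treeDiam_cylinder_rpow_le (fun x => (hΛ x).trans hb.le) hdist ht.le x n).trans
      (ENNReal.ofReal_le_ofReal ?_)
    gcongr
  refine treeHMeasure_le_of_forall_exists_cover (ι := Σ n : ℕ, Fin n → Fin N) ht
    fun δ hδ => ?_
  obtain ⟨m, hm⟩ := exists_treeDiam_cylinder_le hb hΛ hdist hδ
  refine ⟨fun p => if m ≤ p.1 ∧ treeDiam Λ (cyl p) ^ t ≤ bound p then cyl p else ∅,
    fun x hx => ?_, fun p => ?_, ENNReal.tsum_le_tsum fun p => ?_⟩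
  · obtain ⟨p, hmp, hp, hxp⟩ := exists_cyl hx m
    exact mem_iUnion.2 ⟨p, by simpa only [if_pos (And.intro hmp hp)] using hxp⟩
  · dsimp only
    split_ifs with h
    · exact hm _ h.1 _
    · simp [treeDiam_empty]
  · dsimp only
    split_ifs with h
    · exact h.2
    · simp [treeDiam_empty, ht]

lemma treeHMeasure_heavySet_ne_top {μ : Measure (Seq N)} [IsProbabilityMeasure μ] {s : ℝ}
    (hb : b < 0) (hΛ : ∀ x, Λ x ≤ b) (hdist : BddDistortion Λ c) (hs : 0 ≤ s) (hst : s < t) :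
    treeHMeasure Λ t (heavySet μ (s • Λ)) ≠ ⊤ := by
  obtain ⟨a, ha, hsum, hheavy⟩ := exists_weights_of_mem_heavySet (μ := μ) (f := s • Λ)
    (g := t • Λ) (mul_pos (sub_pos.2 hst) (neg_pos.2 hb)) fun x => by
      simp only [Pi.smul_apply, smul_eq_mul]
      nlinarith [hΛ x]
  exact ne_top_of_le_ne_top (hsum.summable.mul_left _).tsum_ofReal_ne_top
    (treeHMeasure_le_tsum μ hb hΛ hdist (hs.trans_lt hst) ha hheavy)

lemma treeDimH_heavySet_le {μ : Measure (Seq N)} [IsProbabilityMeasure μ] {s : ℝ} (hb : b < 0)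
    (hΛ : ∀ x, Λ x ≤ b) (hdist : BddDistortion Λ c) (hs : 0 ≤ s) :
    treeDimH Λ (heavySet μ (s • Λ)) ≤ ENNReal.ofReal s := by
  refine iSup₂_le fun t ht => not_lt.1 fun hst => ?_
  rw [ENNReal.ofReal_lt_coe_iff hs] at hst
  exact treeHMeasure_heavySet_ne_top hb hΛ hdist hs hst ht

/-- The strings `x` whose cylinders of all levels `n ≥ m` have mass at most
`exp (∑_{k<n} f (S^k x) - C)`. -/
def lightSet (μ : Measure (Seq N)) (f : Seq N → ℝ) (C : ℝ) (m : ℕ) : Set (Seq N) :=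
  {x | ∀ n ≥ m, cylMass μ n x ≤ Real.exp (birkhoffSum shift f n x - C)}

variable {μ : Measure (Seq N)} {f : Seq N → ℝ} {C : ℝ} {m : ℕ}

lemma lightSet_mono : Monotone (lightSet μ f C) :=
  fun _ _ hm _ hx n hn => hx n (hm.trans hn)

lemma compl_heavySet_subset_iUnion_lightSet (C : ℕ) :
    (heavySet μ f)ᶜ ⊆ ⋃ m, lightSet μ f C m := fun _ hx => by
  obtain ⟨m, hm⟩ := eventually_atTop.1 (eventually_cylMass_lt_of_notMem_heavySet hx C)
  exact mem_iUnion.2 ⟨m, fun n hn => (hm n hn).le⟩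

variable [IsFiniteMeasure μ]

lemma measure_cylinder_le_of_mem_lightSet {x : Seq N} (hx : x ∈ lightSet μ f C m) {n : ℕ}
    (hn : m ≤ n) :
    μ (PiNat.cylinder x n) ≤ ENNReal.ofReal (Real.exp (birkhoffSum shift f n x - C)) :=
  (ofReal_measureReal (measure_ne_top _ _)).symm.trans_le (ENNReal.ofReal_le_ofReal (hx n hn))

lemma measure_singleton_of_mem_lightSet (hb : b < 0) (hf : ∀ x, f x ≤ b) {x : Seq N}
    (hx : x ∈ lightSet μ f C m) : μ {x} = 0 := by
  have hlim : Tendsto (fun n : ℕ => ENNReal.ofReal (Real.exp (n * b - C))) atTop (𝓝 0) := by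
    rw [← ENNReal.ofReal_zero]
    exact ENNReal.tendsto_ofReal (Real.tendsto_exp_atBot.comp (tendsto_atBot_add_const_right _ _
      (tendsto_natCast_atTop_atTop.atTop_mul_const_of_neg hb)))
  refine nonpos_iff_eq_zero.1 (ge_of_tendsto hlim ?_)
  filter_upwards [eventually_ge_atTop m] with n hn
  refine (measure_mono (singleton_subset_iff.2 (PiNat.self_mem_cylinder x n))).trans
    ((measure_cylinder_le_of_mem_lightSet hx hn).trans (ENNReal.ofReal_le_ofReal ?_))
  gcongr
  exact birkhoffSum_le hf n x

lemma exists_subset_cylinder_firstDiff {A : Set (Seq N)} {x : Seq N} (hA : ¬ A ⊆ {x}) :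
    ∃ y ∈ A, x ≠ y ∧ A ⊆ PiNat.cylinder x (PiNat.firstDiff x y) := by
  obtain ⟨y, ⟨hyA, hxy⟩, hmin⟩ := exists_minimalFor_of_wellFoundedLT
    (fun y => y ∈ A ∧ x ≠ y) (PiNat.firstDiff x) <| by
      obtain ⟨y, hyA, hy⟩ := not_subset.1 hA
      exact ⟨y, hyA, Ne.symm hy⟩
  refine ⟨y, hyA, hxy, fun z hz k hk => ?_⟩
  by_contra hne
  have hxz : x ≠ z := fun h => hne (by rw [h])
  have hle : PiNat.firstDiff x z ≤ k := not_lt.1 fun hlt =>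
    hne (PiNat.apply_eq_of_lt_firstDiff hlt).symm
  have := hmin ⟨hz, hxz⟩ (hle.trans hk.le)
  omega

lemma ofReal_exp_mul_measure_inter_lightSet_le (hb : b < 0) (hΛ : ∀ x, Λ x ≤ b)
    (hb' : ∀ x, b' ≤ Λ x) (ht : 0 < t) {A : Set (Seq N)}
    (hA : treeDiam Λ A ≤ ENNReal.ofReal (Real.exp (m * b'))) :
    ENNReal.ofReal (Real.exp C) * μ (A ∩ lightSet μ (t • Λ) C m) ≤ treeDiam Λ A ^ t := by
  rcases (A ∩ lightSet μ (t • Λ) C m).eq_empty_or_nonempty with hempty | ⟨x, hxA, hx⟩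
  · simp [hempty]
  by_cases hAx : A ⊆ {x}
  · have hx₀ := measure_singleton_of_mem_lightSet (mul_neg_of_pos_of_neg ht hb)
      (fun x => mul_le_mul_of_nonneg_left (hΛ x) ht.le) hx
    simp [measure_mono_null (inter_subset_left.trans hAx) hx₀]
  obtain ⟨y, hyA, hxy, hsub⟩ := exists_subset_cylinder_firstDiff hAx
  set n := PiNat.firstDiff x y
  have exp_le_treeDiam : ENNReal.ofReal (Real.exp (birkhoffSum shift Λ n x)) ≤ treeDiam Λ A :=
    (ENNReal.ofReal_le_ofReal
      (exp_birkhoffSum_le_treeDist (fun x => (hΛ x).trans hb.le) hxy)).trans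
      (treeDist_le_treeDiam hxA hyA)
  have hmn : m ≤ n := by
    have hle := (ENNReal.ofReal_le_ofReal_iff (Real.exp_pos _).le).1 (exp_le_treeDiam.trans hA)
    have := (le_birkhoffSum hb' n x).trans (Real.exp_le_exp.1 hle)
    exact_mod_cast (mul_le_mul_right_of_neg (((hb' x).trans (hΛ x)).trans_lt hb)).1 this
  calc ENNReal.ofReal (Real.exp C) * μ (A ∩ lightSet μ (t • Λ) C m)
      ≤ ENNReal.ofReal (Real.exp C)
          * ENNReal.ofReal (Real.exp (birkhoffSum shift (t • Λ) n x - C)) := by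
        gcongr
        exact (measure_mono (inter_subset_left.trans hsub)).trans
          (measure_cylinder_le_of_mem_lightSet hx hmn)
    _ = ENNReal.ofReal (Real.exp (birkhoffSum shift Λ n x)) ^ t := by
        rw [← ENNReal.ofReal_mul (Real.exp_pos _).le, ← Real.exp_add, add_sub_cancel,
          ENNReal.ofReal_rpow_of_pos (Real.exp_pos _), ← Real.exp_mul, birkhoffSum_smul, mul_comm]
    _ ≤ treeDiam Λ A ^ t := by gcongr

lemma ofReal_exp_mul_measure_inter_lightSet_le_treeHMeasure (hb : b < 0) (hΛ : ∀ x, Λ x ≤ b)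
    (hb' : ∀ x, b' ≤ Λ x) (ht : 0 < t) (Ξ : Set (Seq N)) :
    ENNReal.ofReal (Real.exp C) * μ (Ξ ∩ lightSet μ (t • Λ) C m) ≤ treeHMeasure Λ t Ξ := by
  refine le_iSup₂_of_le (ENNReal.ofReal (Real.exp (m * b')))
    (ENNReal.ofReal_pos.2 (Real.exp_pos _)) (le_iInf₂ fun A hΞ => le_iInf fun hA => ?_)
  calc ENNReal.ofReal (Real.exp C) * μ (Ξ ∩ lightSet μ (t • Λ) C m)
      ≤ ENNReal.ofReal (Real.exp C) * ∑' n, μ (A n ∩ lightSet μ (t • Λ) C m) := by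
        gcongr
        refine (measure_mono (inter_subset_inter_left _ hΞ)).trans ?_
        rw [iUnion_inter]
        exact measure_iUnion_le _
    _ ≤ ∑' n, treeDiam Λ (A n) ^ t := by
        rw [← ENNReal.tsum_mul_left]
        exact ENNReal.tsum_le_tsum fun n =>
          ofReal_exp_mul_measure_inter_lightSet_le hb hΛ hb' ht (hA n)

lemma treeHMeasure_eq_top (hb : b < 0) (hΛ : ∀ x, Λ x ≤ b) (hb' : ∀ x, b' ≤ Λ x) (ht : 0 < t)
    (hnull : μ (heavySet μ (t • Λ)) = 0) {Ξ : Set (Seq N)} (hΞ : μ Ξ ≠ 0) :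
    treeHMeasure Λ t Ξ = ⊤ := by
  have measure_le (C : ℕ) : ENNReal.ofReal (Real.exp C) * μ Ξ ≤ treeHMeasure Λ t Ξ := by
    have hsub : Ξ \ heavySet μ (t • Λ) ⊆ ⋃ m, Ξ ∩ lightSet μ (t • Λ) C m := by
      rw [← inter_iUnion]
      exact inter_subset_inter_right Ξ (compl_heavySet_subset_iUnion_lightSet C)
    have hmono : Monotone fun m => Ξ ∩ lightSet μ (t • Λ) C m :=
      fun _ _ hm => inter_subset_inter_right Ξ (lightSet_mono hm)
    calc ENNReal.ofReal (Real.exp C) * μ Ξ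
        ≤ ENNReal.ofReal (Real.exp C) * μ (⋃ m, Ξ ∩ lightSet μ (t • Λ) C m) := by
          gcongr ENNReal.ofReal _ * ?_
          exact (measure_sdiff_null hnull).symm.trans_le (measure_mono hsub)
      _ = ⨆ m, ENNReal.ofReal (Real.exp C) * μ (Ξ ∩ lightSet μ (t • Λ) C m) := by
          rw [hmono.measure_iUnion, ENNReal.mul_iSup]
      _ ≤ treeHMeasure Λ t Ξ := iSup_le fun m =>
          ofReal_exp_mul_measure_inter_lightSet_le_treeHMeasure hb hΛ hb' ht Ξ
  have hlim : Tendsto (fun C : ℕ => ENNReal.ofReal (Real.exp C) * μ Ξ) atTop (𝓝 ⊤) := by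
    rw [← ENNReal.top_mul hΞ]
    exact ENNReal.Tendsto.mul_const (ENNReal.tendsto_ofReal_atTop.comp
      (Real.tendsto_exp_atTop.comp tendsto_natCast_atTop_atTop)) (.inl ENNReal.top_ne_zero)
  exact top_le_iff.1 (le_of_tendsto' hlim measure_le)

lemma ofReal_le_treeDimH (hb : b < 0) (hΛ : ∀ x, Λ x ≤ b) (hb' : ∀ x, b' ≤ Λ x) (ht : 0 < t)
    (hnull : μ (heavySet μ (t • Λ)) = 0) {Ξ : Set (Seq N)} (hΞ : μ Ξ ≠ 0) :
    ENNReal.ofReal t ≤ treeDimH Λ Ξ := by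
  lift t to ℝ≥0 using ht.le
  rw [ENNReal.ofReal_coe_nnreal]
  exact le_iSup₂_of_le t (treeHMeasure_eq_top hb hΛ hb' ht hnull hΞ) le_rfl

end TreeMetric

theorem upper_hausdorff_dimension_ergodic_general {N : ℕ} {Λ : Seq N → ℝ} (hΛ : Measurable Λ)
    {b : ℝ} (hb : b < 0) (hΛb : ∀ x, Λ x ≤ b) {c : ℝ} (hdist : BddDistortion Λ c)
    (μ : ProbabilityMeasure (Seq N)) (herg : Ergodic shift μ.toMeasure) :
    (⨅ (Ξ : Set (Seq N)) (_ : μ.toMeasure Ξ = 1), treeDimH Λ Ξ)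
      = ENNReal.ofReal (-(entropy μ) / ∫ x, Λ x ∂μ.toMeasure) := by
  obtain ⟨b', hb'⟩ := hdist.exists_lower_bound
  have hΛint : Integrable Λ μ.toMeasure :=
    .of_mem_Icc b' b hΛ.aemeasurable (.of_forall fun x => ⟨hb' x, hΛb x⟩)
  have hint : ∫ x, Λ x ∂μ.toMeasure < 0 := by
    refine lt_of_le_of_lt ?_ hb
    simpa using integral_mono hΛint (integrable_const b) hΛb
  have integral_smul (s : ℝ) : -∫ x, (s • Λ) x ∂μ.toMeasure = s * -∫ x, Λ x ∂μ.toMeasure := by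
    simp [integral_const_mul]
  rw [neg_div, ← div_neg]
  refine le_antisymm (ge_of_tendsto (x := 𝓝[>] (entropy μ / -∫ x, Λ x ∂μ.toMeasure))
    ENNReal.continuous_ofReal.continuousWithinAt (eventually_mem_nhdsWithin.mono fun s hs => ?_))
    (le_iInf₂ fun Ξ hΞ => le_of_tendsto (x := 𝓝[<] (entropy μ / -∫ x, Λ x ∂μ.toMeasure))
    ENNReal.continuous_ofReal.continuousWithinAt (eventually_mem_nhdsWithin.mono fun t ht => ?_))
  · have hs₀ : 0 ≤ s := (div_nonneg (entropy_nonneg μ) (neg_pos.2 hint).le).trans hs.le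
    rw [mem_Ioi, div_lt_iff₀ (neg_pos.2 hint), ← integral_smul] at hs
    exact iInf₂_le_of_le _ (measure_heavySet_eq_one herg (hΛ.const_smul s)
      (fun x => mul_le_mul_of_nonneg_left (hb' x) hs₀) (hΛint.smul s) hs)
      (treeDimH_heavySet_le hb hΛb hdist hs₀)
  · rcases le_or_gt t 0 with ht₀ | ht₀
    · simp [ENNReal.ofReal_of_nonpos ht₀]
    rw [mem_Iio, lt_div_iff₀ (neg_pos.2 hint), ← integral_smul] at ht
    exact ofReal_le_treeDimH hb hΛb hb' ht₀ (measure_heavySet_eq_zero herg (hΛ.const_smul t)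
      (fun x => mul_nonpos_of_nonneg_of_nonpos ht₀.le ((hΛb x).trans hb.le)) (hΛint.smul t) ht)
      (by simp [hΞ])

/-- **Proposition 6.4.**  For an ergodic shift-invariant probability measure `μ` on `Σ^ℕ`,
the upper Hausdorff dimension of `μ` (with respect to the metric `d(i,j) = s_{i∧j}`),
`inf { dim_H Ξ : μ(Ξ) = 1 }`, equals `-h(μ)/∫Λ dμ`. -/
theorem upper_hausdorff_dimension_ergodic
    {N : ℕ} (hN : 0 < N)
    (Λ : Seq N → ℝ) (hΛcont : Continuous Λ)
    (cmin cmax : ℝ) (hcmax : cmax < 0) (hccmin : cmin ≤ cmax)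
    (hΛbdd : ∀ x, Λ x ∈ Set.Icc cmin cmax)
    (c : ℝ) (hc : 1 ≤ c) (hdist : BddDistortion Λ c)
    (μ : ProbabilityMeasure (Seq N)) (herg : Ergodic shift μ.toMeasure) :
    (⨅ (Ξ : Set (Seq N)) (_ : μ.toMeasure Ξ = 1), treeDimH Λ Ξ)
      = ENNReal.ofReal (-(entropy μ) / ∫ x, Λ x ∂μ.toMeasure) :=
  upper_hausdorff_dimension_ergodic_general hΛcont.measurable hcmax
    (fun x => (hΛbdd x).2) hdist μ herg

end Multifractal
end
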